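/- Let k be a positive integer, let ℓ = (2k+3)·(2k+6), and let N = 2^{2((k+1)·log₂ℓ + ℓ·log₂(k+2))} + 2. Then every graph G in obs_{≤si}(C_k), the minimal obstruction set for cutwidth at most k under the strong immersion order, has at most N^{k+1} vertices. -/

import Mathlib

/-- A finite undirected multigraph without loops. -/
structure Multigraph where
  V : Type
  E : Type
  finV : Finite V
  finE : Finite E
  ends : E → V × V
  loopless : ∀ e, (ends e).1 ≠ (ends e).2

attribute [instance] Multigraph.finV Multigraph.finE

namespace Multigraph

/-- `δ_G(S)`: the number of edges of `G` with exactly one endpoint in `S`. -/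
noncomputable def delta (G : Multigraph) (S : Set G.V) : ℕ :=
  {e : G.E | ¬ ((G.ends e).1 ∈ S ↔ (G.ends e).2 ∈ S)}.ncard

/-- The width `cw_σ(G)` of an ordering, represented as an injective ranking `ρ : V → ℕ`. -/
noncomputable def cwOrd (G : Multigraph) (ρ : G.V → ℕ) : ℕ :=
  sSup {w | ∃ v : G.V, w = G.delta {u | ρ u ≤ ρ v}}

/-- The cutwidth of a multigraph. -/
noncomputable def cutwidth (G : Multigraph) : ℕ :=
  sInf {w | ∃ ρ : G.V → ℕ, Function.Injective ρ ∧ G.cwOrd ρ = w}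

/-- Walks in a multigraph. -/
inductive Walk (G : Multigraph) : G.V → G.V → Type
  | nil (v : G.V) : Walk G v v
  | cons {u v w : G.V} (e : G.E)
      (h : G.ends e = (u, v) ∨ G.ends e = (v, u)) (p : Walk G v w) : Walk G u w

namespace Walk

def edges {G : Multigraph} : ∀ {u v : G.V}, G.Walk u v → List G.E
  | _, _, .nil _ => []
  | _, _, .cons e _ p => e :: p.edges

def support {G : Multigraph} : ∀ {u v : G.V}, G.Walk u v → List G.V
  | _, _, .nil v => [v]
  | u, _, .cons _ _ p => u :: p.support

end Walk

def Connected (G : Multigraph) : Prop := ∀ u v : G.V, Nonempty (G.Walk u v)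

/-- An immersion model of `H` in `G`. -/
structure ImmersionModel (H G : Multigraph) where
  vmap : H.V → G.V
  inj : Function.Injective vmap
  emap : (e : H.E) → G.Walk (vmap (H.ends e).1) (vmap (H.ends e).2)
  isPath : ∀ e, ((emap e).support).Nodup
  edgeDisj : ∀ e e', e ≠ e' → ∀ f, f ∈ (emap e).edges → f ∉ (emap e').edges

/-- `H ≤_i G`. -/
def Immersion (H G : Multigraph) : Prop := Nonempty (ImmersionModel H G)

/-- A strong immersion model: no internal vertex of a path is a branch vertex. -/
structure StrongImmersionModel (H G : Multigraph) extends ImmersionModel H G where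
  strong : ∀ e, ∀ x, x ∈ (emap e).support →
    x ≠ vmap (H.ends e).1 → x ≠ vmap (H.ends e).2 → x ∉ Set.range vmap

/-- `H ≤_si G`. -/
def StrongImmersion (H G : Multigraph) : Prop := Nonempty (StrongImmersionModel H G)

/-- Isomorphism of multigraphs. -/
structure Iso (G H : Multigraph) where
  fv : G.V ≃ H.V
  fe : G.E ≃ H.E
  pres : ∀ e, H.ends (fe e) = (fv (G.ends e).1, fv (G.ends e).2)
           ∨ H.ends (fe e) = (fv (G.ends e).2, fv (G.ends e).1)

def Isomorphic (G H : Multigraph) : Prop := Nonempty (Iso G H)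

/-- The minimal obstruction set of a class `C` with respect to a partial order `le`. -/
def obstructions (le : Multigraph → Multigraph → Prop) (C : Set Multigraph) :
    Set Multigraph :=
  {G | G ∉ C ∧ ∀ G', le G' G → ¬ G'.Isomorphic G → G' ∈ C}

/-- `C_k`: the class of multigraphs of cutwidth at most `k`. -/
def cutwidthClass (k : ℕ) : Set Multigraph := {G | G.cutwidth ≤ k}

/-- The degree of a vertex (each parallel edge counts once at each endpoint). -/
noncomputable def degree (G : Multigraph) (v : G.V) : ℕ :=
  {e : G.E | (G.ends e).1 = v ∨ (G.ends e).2 = v}.ncard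

/-- The number of `A`-blocks of an ordering `ρ`: the number of maximal runs of
consecutive (in `ρ`) vertices belonging to `A`, counted via block-starting vertices. -/
noncomputable def blockCount (G : Multigraph) (ρ : G.V → ℕ) (A : Set G.V) : ℕ :=
  {v : G.V | v ∈ A ∧ ∀ u : G.V, ρ u < ρ v →
      ∃ w : G.V, w ∉ A ∧ ρ u ≤ ρ w ∧ ρ w < ρ v}.ncard

/-- The extension `G*` of a `k`-boundaried graph `(G, x)`. -/
def extension (G : Multigraph) {k : ℕ} (x : Fin k → G.V) : Multigraph where
  V := G.V ⊕ Fin k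
  E := G.E ⊕ Fin k
  finV := inferInstance
  finE := inferInstance
  ends := Sum.elim (fun e => (Sum.inl (G.ends e).1, Sum.inl (G.ends e).2))
                   (fun i => (Sum.inl (x i), Sum.inr i))
  loopless := by
    rintro (e | i)
    · simpa using G.loopless e
    · simp

/-- The join `𝐀 ⊕ 𝐁` of two `k`-boundaried graphs. -/
def join {k : ℕ} (A B : Multigraph) (x : Fin k → A.V) (y : Fin k → B.V) : Multigraph where
  V := A.V ⊕ B.V
  E := (A.E ⊕ B.E) ⊕ Fin k
  finV := inferInstance
  finE := inferInstance
  ends := Sum.elim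
    (Sum.elim (fun e => (Sum.inl (A.ends e).1, Sum.inl (A.ends e).2))
              (fun e => (Sum.inr (B.ends e).1, Sum.inr (B.ends e).2)))
    (fun i => (Sum.inl (x i), Sum.inr (y i)))
  loopless := by
    rintro ((e | e) | i)
    · simpa using A.loopless e
    · simpa using B.loopless e
    · simp

/-- An `ℓ`-bucketing of an ordering `ρ` (buckets indexed 1,…,ℓ). -/
def IsBucketing (G : Multigraph) (ρ : G.V → ℕ) (ℓ : ℕ) (T : G.V → ℕ) : Prop :=
  (∀ v, 1 ≤ T v ∧ T v ≤ ℓ) ∧ ∀ u v : G.V, ρ u ≤ ρ v → T u ≤ T v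

/-- `width(G,σ,T,i)`: the maximum size of a cut in `cuts(G,σ,T,i)`; these cuts
are described by their left side `S`, which contains all buckets before `i`,
a `σ`-downward-closed part of bucket `i`, and nothing else. -/
noncomputable def bucketWidth (G : Multigraph) (ρ : G.V → ℕ) (T : G.V → ℕ) (i : ℕ) : ℕ :=
  sSup {w | ∃ S : Set G.V,
    (∀ v, T v < i → v ∈ S) ∧ (∀ v ∈ S, T v ≤ i) ∧
    (∀ u v : G.V, T u = i → T v = i → ρ u ≤ ρ v → v ∈ S → u ∈ S) ∧
    w = G.delta S}

/-- A `(k,ℓ)`-bucket interface. -/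
structure BucketInterface (k ℓ : ℕ) where
  b : Fin k → ℕ
  b' : Fin k → ℕ
  mu : ℕ → ℕ
  mu' : ℕ → ℕ
  b_mem : ∀ i, b i ∈ Set.Icc 1 ℓ
  b'_mem : ∀ i, b' i ∈ Set.Icc 1 ℓ
  mu_le : ∀ j, mu j ≤ k
  mu'_le : ∀ j, mu' j ≤ k

/-- A `k`-boundaried graph `(G, x)` conforms with a `(k,ℓ)`-bucket interface. -/
def Conforms {k : ℕ} (G : Multigraph) (x : Fin k → G.V) (ℓ : ℕ)
    (I : BucketInterface k ℓ) : Prop :=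
  ∃ ρ : (G.extension x).V → ℕ, Function.Injective ρ ∧
  ∃ T : (G.extension x).V → ℕ, (G.extension x).IsBucketing ρ ℓ T ∧
    (∀ v : G.V, Odd (T (Sum.inl v))) ∧
    (∀ i : Fin k, Even (T (Sum.inr i))) ∧
    (∀ i : Fin k, T (Sum.inl (x i)) = I.b i) ∧
    (∀ i : Fin k, T (Sum.inr i) = I.b' i) ∧
    (∀ j ∈ Set.Icc 1 ℓ,
      G.bucketWidth (fun v => ρ (Sum.inl v)) (fun v => T (Sum.inl v)) j ≤ I.mu j) ∧
    (∀ j ∈ Set.Icc 1 ℓ, (G.extension x).bucketWidth ρ T j ≤ I.mu' j)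

/-- `m` pairwise edge-disjoint paths between the sets `X` and `Y`. -/
def ConnectorBetween (G : Multigraph) (X Y : Set G.V) (m : ℕ) : Prop :=
  ∃ (s t : Fin m → G.V) (P : (i : Fin m) → G.Walk (s i) (t i)),
    (∀ i, s i ∈ X) ∧ (∀ i, t i ∈ Y) ∧ (∀ i, (P i).support.Nodup) ∧
    ∀ i j, i ≠ j → ∀ f, f ∈ (P i).edges → f ∉ (P j).edges

/-- A linked ordering. -/
def Linked (G : Multigraph) (ρ : G.V → ℕ) : Prop :=
  ∀ u u' : G.V, ρ u ≤ ρ u' →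
    G.ConnectorBetween {z | ρ z ≤ ρ u} {z | ¬ ρ z ≤ ρ u'}
      (sInf {w | ∃ v : G.V, ρ u ≤ ρ v ∧ ρ v ≤ ρ u' ∧ w = G.delta {z | ρ z ≤ ρ v}})

/-- The multigraph obtained by deleting a set of edges. -/
def deleteEdges (G : Multigraph) (F : Set G.E) : Multigraph where
  V := G.V
  E := {e : G.E // e ∉ F}
  finV := G.finV
  finE := inferInstance
  ends e := G.ends e.1
  loopless e := G.loopless e.1

/-- `dcw_k(G)`: minimum number of edges to delete to reach cutwidth at most `k`. -/
noncomputable def dcw (k : ℕ) (G : Multigraph) : ℕ :=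
  sInf {w | ∃ F : Set G.E, (G.deleteEdges F).cutwidth ≤ k ∧ F.ncard = w}

/-- The class `C_{w,k}`. -/
def dcwClass (w k : ℕ) : Set Multigraph := {G | dcw k G ≤ w}

/-- Induced subgraph `G[X]`. -/
def induce (G : Multigraph) (X : Set G.V) : Multigraph where
  V := X
  E := {e : G.E // (G.ends e).1 ∈ X ∧ (G.ends e).2 ∈ X}
  finV := inferInstance
  finE := inferInstance
  ends e := (⟨(G.ends e.1).1, e.2.1⟩, ⟨(G.ends e.1).2, e.2.2⟩)
  loopless := by
    intro e h
    exact G.loopless e.1 (Subtype.ext_iff.mp h)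

/-- A graph is `ℋ`-immersion-free if it contains no member of `ℋ` as an immersion. -/
def ImmersionFree (H : Set Multigraph) (G : Multigraph) : Prop :=
  ∀ X ∈ H, ¬ Immersion X G

/-- `aic_ℋ(G)`: minimum number of edge deletions to reach an `ℋ`-immersion-free graph. -/
noncomputable def aic (H : Set Multigraph) (G : Multigraph) : ℕ :=
  sInf {w | ∃ F : Set G.E, ImmersionFree H (G.deleteEdges F) ∧ F.ncard = w}

/-- The class `C_{w,ℋ}`. -/
def aicClass (w : ℕ) (H : Set Multigraph) : Set Multigraph := {G | aic H G ≤ w}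

/-- `ℋ` is a `≤_i`-antichain. -/
def IsAntichainImm (H : Set Multigraph) : Prop :=
  ∀ G₁ ∈ H, ∀ G₂ ∈ H, Immersion G₁ G₂ → Isomorphic G₁ G₂

/-- Disjoint union of two multigraphs. -/
def disjUnion (G H : Multigraph) : Multigraph where
  V := G.V ⊕ H.V
  E := G.E ⊕ H.E
  finV := inferInstance
  finE := inferInstance
  ends := Sum.elim (fun e => (Sum.inl (G.ends e).1, Sum.inl (G.ends e).2))
                   (fun e => (Sum.inr (H.ends e).1, Sum.inr (H.ends e).2))
  loopless := by
    rintro (e | e)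
    · simpa using G.loopless e
    · simpa using H.loopless e

/-- Disjoint union of a finite family of multigraphs. -/
def sigmaUnion {m : ℕ} (Gs : Fin m → Multigraph) : Multigraph where
  V := Σ i, (Gs i).V
  E := Σ i, (Gs i).E
  finV := inferInstance
  finE := inferInstance
  ends e := (⟨e.1, ((Gs e.1).ends e.2).1⟩, ⟨e.1, ((Gs e.1).ends e.2).2⟩)
  loopless := by
    intro e h
    exact (Gs e.1).loopless e.2 (by simpa using h)

/-- `cw_σ(G,X) = δ_G(X) + cw_{σ_X}(G[X])`. -/
noncomputable def cwRel (G : Multigraph) (ρ : G.V → ℕ) (X : Set G.V) : ℕ :=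
  G.delta X + (G.induce X).cwOrd (fun v => ρ v.val)

/-- Membership in the family of prefixes relevant to `X`-linkedness: the complement
of `X` (the prefix right before `X` starts) and the prefixes ending inside `X`. -/
def IsXPrefix (G : Multigraph) (ρ : G.V → ℕ) (X : Set G.V) (P : Set G.V) : Prop :=
  P = Xᶜ ∨ ∃ v ∈ X, P = {z | ρ z ≤ ρ v}

/-- An `X`-linked ordering. -/
def XLinked (G : Multigraph) (ρ : G.V → ℕ) (X : Set G.V) : Prop :=
  (∀ u v : G.V, u ∉ X → v ∈ X → ρ u < ρ v) ∧
  ∀ P P' : Set G.V, G.IsXPrefix ρ X P → G.IsXPrefix ρ X P' → P ⊆ P' →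
    G.ConnectorBetween P P'ᶜ
      (sInf {w | ∃ Q : Set G.V, G.IsXPrefix ρ X Q ∧ P ⊆ Q ∧ Q ⊆ P' ∧ w = G.delta Q})

end Multigraph

namespace Multigraph

noncomputable instance instFintypeV (G : Multigraph) : Fintype G.V := Fintype.ofFinite _
noncomputable instance instFintypeE (G : Multigraph) : Fintype G.E := Fintype.ofFinite _

open Classical in
/-- Indicator that the edge `e` crosses the cut `S`. -/
noncomputable def cr (G : Multigraph) (S : Set G.V) (e : G.E) : ℤ :=
  if ((G.ends e).1 ∈ S ↔ (G.ends e).2 ∈ S) then 0 else 1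

theorem delta_eq (G : Multigraph) (S : Set G.V) : (G.delta S : ℤ) = ∑ e, G.cr S e := by
  classical
  unfold delta cr
  rw [Set.ncard_eq_toFinset_card', Finset.sum_ite]
  simp [Finset.filter_not]

/-- Prefix of `v` in the lexicographic order by `(T, ρ)`. -/
def pre {V : Type} (T ρ : V → ℕ) (v : V) : Set V := {u | T u < T v ∨ (T u = T v ∧ ρ u ≤ ρ v)}

/-- Having a lexicographic ordering of width at most `k`. -/
def OW (G : Multigraph) (k : ℕ) : Prop :=
  ∃ T ρ : G.V → ℕ, Function.Injective (fun v => (T v, ρ v)) ∧ ∀ v, G.delta (pre T ρ v) ≤ k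

theorem exists_rank {V : Type} [Finite V] (T ρ : V → ℕ)
    (h : Function.Injective (fun v => (T v, ρ v))) :
    ∃ ρ' : V → ℕ, Function.Injective ρ' ∧ (∀ v, ρ' v < Nat.card V) ∧
      ∀ v, {u | ρ' u ≤ ρ' v} = pre T ρ v := by
  classical
  have hself : ∀ v, v ∈ pre T ρ v := fun v => Or.inr ⟨rfl, le_rfl⟩
  have htrans : ∀ u v, u ∈ pre T ρ v → pre T ρ u ⊆ pre T ρ v := by
    intro u v huv w hw
    simp only [pre, Set.mem_ofPred_eq] at *
    omega
  have hanti : ∀ u v, u ∈ pre T ρ v → v ∈ pre T ρ u → u = v := by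
    intro u v h1 h2
    apply h
    simp only [pre, Set.mem_ofPred_eq] at *
    simp only [Prod.mk.injEq]
    omega
  have htot : ∀ u v, u ∈ pre T ρ v ∨ v ∈ pre T ρ u := by
    intro u v
    simp only [pre, Set.mem_ofPred_eq]
    omega
  have hlt : ∀ u v, u ∈ pre T ρ v → u ≠ v → (pre T ρ u).ncard < (pre T ρ v).ncard := by
    intro u v huv hne
    apply Set.ncard_lt_ncard _ (Set.toFinite _)
    refine ⟨htrans u v huv, fun hh => hne (hanti u v huv (hh (hself v)))⟩
  have hpos : ∀ v, 0 < (pre T ρ v).ncard := fun v =>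
    (Set.ncard_pos (Set.toFinite _)).2 ⟨v, hself v⟩
  have hle : ∀ v, (pre T ρ v).ncard ≤ Nat.card V := fun v => by
    rw [← Set.ncard_univ]
    exact Set.ncard_le_ncard (Set.subset_univ _) (Set.toFinite _)
  refine ⟨fun v => (pre T ρ v).ncard - 1, ?_, ?_, ?_⟩
  · intro u v huv
    by_contra hne
    have := hpos u; have := hpos v
    simp only at huv
    rcases htot u v with h1 | h1
    · have := hlt u v h1 hne; omega
    · have := hlt v u h1 (Ne.symm hne); omega
  · intro v
    have := hpos v; have := hle v
    simp only; omega
  · intro v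
    ext u
    simp only [Set.mem_ofPred_eq]
    have := hpos u; have := hpos v
    constructor
    · intro h1
      by_contra h2
      have h3 := (htot u v).resolve_left h2
      have hne : v ≠ u := by rintro rfl; exact h2 (hself _)
      have := hlt v u h3 hne
      omega
    · intro h1
      by_cases hne : u = v
      · subst hne; rfl
      · have := hlt u v h1 hne; omega

theorem cutwidth_le_iff (G : Multigraph) (k : ℕ) : G.cutwidth ≤ k ↔ G.OW k := by
  have hbdd : ∀ ρ : G.V → ℕ, BddAbove {w | ∃ v : G.V, w = G.delta {u | ρ u ≤ ρ v}} := by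
    intro ρ
    apply Set.Finite.bddAbove
    have : {w | ∃ v : G.V, w = G.delta {u | ρ u ≤ ρ v}}
        = Set.range (fun v => G.delta {u | ρ u ≤ ρ v}) := by
      ext w; simp [eq_comm]
    rw [this]; exact Set.finite_range _
  constructor
  · intro h
    have hne : {w | ∃ ρ : G.V → ℕ, Function.Injective ρ ∧ G.cwOrd ρ = w}.Nonempty := by
      obtain ⟨f, hf⟩ := Countable.exists_injective_nat G.V
      exact ⟨_, f, hf, rfl⟩
    obtain ⟨ρ, hρ, hw⟩ := Nat.sInf_mem hne
    refine ⟨fun _ => 0, ρ, fun u v huv => hρ (by simpa using huv), fun v => ?_⟩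
    have : pre (fun _ => 0) ρ v = {u | ρ u ≤ ρ v} := by ext; simp [pre]
    rw [this]
    refine le_trans ?_ h
    unfold cutwidth
    rw [← hw]
    exact le_csSup (hbdd ρ) ⟨v, rfl⟩
  · rintro ⟨T, ρ, hinj, hk⟩
    obtain ⟨ρ', h1, -, h2⟩ := exists_rank T ρ hinj
    refine le_trans (Nat.sInf_le ⟨ρ', h1, rfl⟩) ?_
    unfold cwOrd
    rcases isEmpty_or_nonempty G.V with he | he
    · have : {w | ∃ v : G.V, w = G.delta {u | ρ' u ≤ ρ' v}} = ∅ := by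
        ext w; simp
      rw [this]; simp
    · apply csSup_le
      · exact ⟨_, he.some, rfl⟩
      · rintro w ⟨v, rfl⟩
        rw [h2]; exact hk v

/-- Cut domination. -/
def Dom (H K : Multigraph) : Prop :=
  ∃ f : H.V → K.V, Function.Injective f ∧ ∀ S : Set K.V, H.delta (f ⁻¹' S) ≤ K.delta S

theorem delta_empty (G : Multigraph) : G.delta ∅ = 0 := by
  simp [delta]

theorem delta_down_le {G : Multigraph} {T ρ : G.V → ℕ} {k : ℕ}
    (hk : ∀ v, G.delta (pre T ρ v) ≤ k) (D : Set G.V)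
    (hD : ∀ u v, v ∈ D → u ∈ pre T ρ v → u ∈ D) : G.delta D ≤ k := by
  classical
  rcases D.eq_empty_or_nonempty with rfl | hne
  · simp [delta_empty]
  · obtain ⟨v, hv, hmax⟩ := Set.exists_max_image D (fun v => toLex (T v, ρ v))
      (Set.toFinite D) hne
    have : D = pre T ρ v := by
      ext u
      constructor
      · intro hu
        have := hmax u hu
        rw [Prod.Lex.toLex_le_toLex] at this
        exact this
      · exact hD u v hv
    rw [this]; exact hk v

theorem OW.of_dom {H K : Multigraph} {k : ℕ} (h : Dom H K) (hK : K.OW k) : H.OW k := by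
  obtain ⟨f, hf, hS⟩ := h
  obtain ⟨T, ρ, hi, hk⟩ := hK
  refine ⟨T ∘ f, ρ ∘ f, hi.comp hf, fun v => ?_⟩
  have : pre (T ∘ f) (ρ ∘ f) v = f ⁻¹' (pre T ρ (f v)) := rfl
  rw [this]
  exact (hS _).trans (hk _)

theorem cr_cases (G : Multigraph) (S : Set G.V) (e : G.E) : G.cr S e = 0 ∨ G.cr S e = 1 := by
  unfold cr; split_ifs <;> simp

theorem delta_submod (G : Multigraph) (S R : Set G.V) :
    G.delta (S ∩ R) + G.delta (S ∪ R) ≤ G.delta S + G.delta R := by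
  zify
  simp only [delta_eq, ← Finset.sum_add_distrib]
  apply Finset.sum_le_sum
  intro e _
  unfold cr
  by_cases h1 : (G.ends e).1 ∈ S <;> by_cases h2 : (G.ends e).2 ∈ S <;>
  by_cases h3 : (G.ends e).1 ∈ R <;> by_cases h4 : (G.ends e).2 ∈ R <;> simp [h1, h2, h3, h4]

theorem delta_modular (G : Multigraph) (S X Y : Set G.V) (hSX : Disjoint S X) (hSY : Disjoint S Y)
    (hXY : Disjoint X Y)
    (hno : ∀ e, ¬ ((G.ends e).1 ∈ X ∧ (G.ends e).2 ∈ Y) ∧ ¬ ((G.ends e).1 ∈ Y ∧ (G.ends e).2 ∈ X)) :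
    G.delta (S ∪ X) + G.delta (S ∪ Y) = G.delta S + G.delta (S ∪ Y ∪ X) := by
  zify
  simp only [delta_eq, ← Finset.sum_add_distrib]
  apply Finset.sum_congr rfl
  intro e _
  have h := hno e
  rw [Set.disjoint_left] at hSX hSY hXY
  have a1 := @hSX (G.ends e).1
  have a2 := @hSX (G.ends e).2
  have a3 := @hSY (G.ends e).1
  have a4 := @hSY (G.ends e).2
  have a5 := @hXY (G.ends e).1
  have a6 := @hXY (G.ends e).2
  unfold cr
  by_cases h1 : (G.ends e).1 ∈ S <;> by_cases h2 : (G.ends e).2 ∈ S <;>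
  by_cases h3 : (G.ends e).1 ∈ X <;> by_cases h4 : (G.ends e).2 ∈ X <;>
  by_cases h5 : (G.ends e).1 ∈ Y <;> by_cases h6 : (G.ends e).2 ∈ Y <;>
  simp_all

end Multigraph

namespace Multigraph

/-- A block ordering with `n` monochromatic blocks. -/
structure BlockOrd (G : Multigraph) (A : Set G.V) (ρ : G.V → ℕ) (k n : ℕ) (T : G.V → ℕ) : Prop where
  lt : ∀ v, T v < n
  mono : ∀ u v, T u = T v → (u ∈ A ↔ v ∈ A)
  cons : ∀ u v, (u ∈ A ↔ v ∈ A) → T u < T v → ρ u < ρ v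
  width : ∀ v, G.delta (pre T ρ v) ≤ k

theorem no_local_max (k : ℕ) (a : ℕ → ℕ) (ha : ∀ i ≤ 2 * k + 2, a i ≤ k) :
    ∃ j, j + 2 ≤ 2 * k + 2 ∧ a j ≤ a (j + 1) ∧ a (j + 2) ≤ a (j + 1) := by
  by_contra hcon
  push Not at hcon
  by_cases h : ∃ i ≤ k, a i ≤ a (i + 1)
  · obtain ⟨i, hi, hle⟩ := h
    have : ∀ d, d ≤ k + 1 → d ≤ a (i + 1 + d) ∧ a (i + d) ≤ a (i + d + 1) := by
      intro d
      induction d with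
      | zero => intro _; exact ⟨Nat.zero_le _, hle⟩
      | succ d ih =>
        intro hd
        obtain ⟨h1, h2⟩ := ih (by omega)
        have h3 := hcon (i + d) (by omega) h2
        have e1 : i + 1 + (d + 1) = i + d + 2 := by ring
        have e2 : i + (d + 1) = i + d + 1 := by ring
        have e3 : i + 1 + d = i + d + 1 := by ring
        have e4 : i + d + 1 + 1 = i + d + 2 := by ring
        rw [e1, e2, e4]; rw [e3] at h1
        omega
    have h1 := (this (k + 1) le_rfl).1
    have h2 := ha (i + 1 + (k + 1)) (by omega)
    omega
  · push Not at h
    have : ∀ d, d ≤ k + 1 → a d + d ≤ a 0 := by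
      intro d
      induction d with
      | zero => intro _; simp
      | succ d ih => intro hd; have := ih (by omega); have := h d (by omega); omega
    have h1 := this (k + 1) le_rfl
    have h2 := ha 0 (by omega)
    omega

theorem BlockOrd.merge {G : Multigraph} {A : Set G.V} {ρ : G.V → ℕ} {k n : ℕ} {T : G.V → ℕ}
    (h : BlockOrd G A ρ k n T) (i : ℕ) (hi : i + 1 < n)
    (hm : ∀ u v, T u = i → T v = i + 1 → (u ∈ A ↔ v ∈ A)) :
    ∃ T', BlockOrd G A ρ k (n - 1) T' := by
  refine ⟨fun v => if T v ≤ i then T v else T v - 1, ?_, ?_, ?_, ?_⟩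
  · intro v
    have := h.lt v
    split_ifs <;> omega
  · intro u v huv
    by_cases e : T u = T v
    · exact h.mono u v e
    · by_cases hu : T u ≤ i <;> by_cases hv : T v ≤ i <;> simp only [hu, hv, if_true, if_false] at huv
      · omega
      · exact hm u v (by omega) (by omega)
      · exact (hm v u (by omega) (by omega)).symm
      · omega
  · intro u v huv hlt
    apply h.cons u v huv
    split_ifs at hlt <;> omega
  · intro v
    convert h.width v using 2
    ext u
    simp only [pre, Set.mem_ofPred_eq]
    by_cases hu : T u ≤ i <;> by_cases hv : T v ≤ i <;> simp only [hu, hv, if_true, if_false]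
    · by_cases e : T u = i ∧ T v = i + 1
      · have h1 := h.cons u v (hm u v e.1 e.2) (by omega)
        constructor <;> intro _ <;> omega
      · omega
    · by_cases e : T v = i ∧ T u = i + 1
      · have h1 := h.cons v u (hm v u e.1 e.2) (by omega)
        constructor <;> intro _ <;> omega
      · omega
    · omega

theorem BlockOrd.swap {G : Multigraph} {A : Set G.V} {ρ : G.V → ℕ} {k n : ℕ} {T : G.V → ℕ}
    (h : BlockOrd G A ρ k n T) (i : ℕ) (hi : i + 2 < n)
    (hm : ∀ u v, T u = i → T v = i + 2 → (u ∈ A ↔ v ∈ A))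
    (hd : ∀ u v, T u = i + 1 → T v = i + 2 → ¬ (u ∈ A ↔ v ∈ A))
    (hno : ∀ e, ¬ (T (G.ends e).1 = i + 1 ∧ T (G.ends e).2 = i + 2) ∧
      ¬ (T (G.ends e).1 = i + 2 ∧ T (G.ends e).2 = i + 1))
    (h1 : G.delta {u | T u < i + 1} ≤ G.delta {u | T u < i + 2})
    (h2 : G.delta {u | T u < i + 3} ≤ G.delta {u | T u < i + 2}) :
    ∃ T', BlockOrd G A ρ k (n - 1) T' := by
  set T' : G.V → ℕ := fun v => if T v = i + 2 then i else if T v ≤ i + 1 then T v else T v - 1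
    with hT'
  have c0 : ∀ v, T v ≤ i → T' v = T v := by
    intro v hv; simp only [hT']; rw [if_neg (by omega), if_pos (by omega)]
  have c1 : ∀ v, T v = i + 1 → T' v = i + 1 := by
    intro v hv; simp only [hT']; rw [if_neg (by omega), if_pos (by omega), hv]
  have c2 : ∀ v, T v = i + 2 → T' v = i := by
    intro v hv; simp only [hT']; rw [if_pos hv]
  have c3 : ∀ v, i + 3 ≤ T v → T' v = T v - 1 := by
    intro v hv; simp only [hT']; rw [if_neg (by omega), if_neg (by omega)]
  have cc : ∀ v, (T v ≤ i ∧ T' v = T v) ∨ (T v = i + 1 ∧ T' v = i + 1) ∨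
      (T v = i + 2 ∧ T' v = i) ∨ (i + 3 ≤ T v ∧ T' v = T v - 1) := by
    intro v
    have := c0 v; have := c1 v; have := c2 v; have := c3 v
    omega
  clear_value T'
  refine ⟨T', ?_, ?_, ?_, ?_⟩
  · intro v
    have := h.lt v
    have := cc v
    omega
  · intro u v huv
    have hu := cc u
    have hv := cc v
    by_cases e : T u = T v
    · exact h.mono u v e
    · by_cases e1 : T u = i ∧ T v = i + 2
      · exact hm u v e1.1 e1.2
      · have e2 : T v = i ∧ T u = i + 2 := by omega
        exact (hm v u e2.1 e2.2).symm
  · intro u v huv hlt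
    have hu := cc u
    have hv := cc v
    have : ¬ (T v = i + 1 ∧ T u = i + 2) := fun e => hd v u e.1 e.2 huv.symm
    apply h.cons u v huv
    omega
  · intro v
    have hv := cc v
    have hw := h.width v
    -- order facts inside the merged block
    have hord : ∀ u, T u = i → T v = i + 2 → ρ u < ρ v := fun u a b =>
      h.cons u v (hm u v a b) (by omega)
    have hord' : ∀ u, T u = i + 2 → T v = i → ρ v < ρ u := fun u a b =>
      h.cons v u (hm v u b a) (by omega)
    rcases hv with hv | hv | hv | hv
    · convert hw using 2
      ext u
      have hu := cc u
      have := hord' u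
      simp only [pre, Set.mem_ofPred_eq]
      omega
    · -- `v` in the block `i+1`
      have key := G.delta_modular (pre T ρ v) {u | T u = i + 2} {u | T u = i + 1 ∧ ρ v < ρ u}
        (by rw [Set.disjoint_left]; intro u; simp only [pre, Set.mem_ofPred_eq]; omega)
        (by rw [Set.disjoint_left]; intro u; simp only [pre, Set.mem_ofPred_eq]; omega)
        (by rw [Set.disjoint_left]; intro u; simp only [Set.mem_ofPred_eq]; omega)
        (by intro e; have := hno e; simp only [Set.mem_ofPred_eq]; omega)
      have e1 : pre T ρ v ∪ {u | T u = i + 1 ∧ ρ v < ρ u} = {u | T u < i + 2} := by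
        ext u; simp only [pre, Set.mem_union, Set.mem_ofPred_eq]; omega
      have e2 : {u | T u < i + 2} ∪ {u | T u = i + 2} = {u | T u < i + 3} := by
        ext u; simp only [Set.mem_union, Set.mem_ofPred_eq]; omega
      have e3 : pre T' ρ v = pre T ρ v ∪ {u | T u = i + 2} := by
        ext u
        have hu := cc u
        simp only [pre, Set.mem_union, Set.mem_ofPred_eq]; omega
      rw [e1, e2] at key
      rw [e3]
      omega
    · -- `v` in the block `i+2`
      have key := G.delta_modular {u | T u < i + 1} {u | T u = i + 2 ∧ ρ u ≤ ρ v} {u | T u = i + 1}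
        (by rw [Set.disjoint_left]; intro u; simp only [Set.mem_ofPred_eq]; omega)
        (by rw [Set.disjoint_left]; intro u; simp only [Set.mem_ofPred_eq]; omega)
        (by rw [Set.disjoint_left]; intro u; simp only [Set.mem_ofPred_eq]; omega)
        (by intro e; have := hno e; simp only [Set.mem_ofPred_eq]; omega)
      have e1 : {u | T u < i + 1} ∪ {u | T u = i + 1} = {u | T u < i + 2} := by
        ext u; simp only [Set.mem_union, Set.mem_ofPred_eq]; omega
      have e2 : {u | T u < i + 2} ∪ {u | T u = i + 2 ∧ ρ u ≤ ρ v} = pre T ρ v := by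
        ext u; simp only [pre, Set.mem_union, Set.mem_ofPred_eq]; omega
      have e3 : pre T' ρ v = {u | T u < i + 1} ∪ {u | T u = i + 2 ∧ ρ u ≤ ρ v} := by
        ext u
        have hu := cc u
        have := hord u
        simp only [pre, Set.mem_union, Set.mem_ofPred_eq]; omega
      rw [e1, e2] at key
      rw [e3]
      omega
    · convert hw using 2
      ext u
      have hu := cc u
      simp only [pre, Set.mem_ofPred_eq]
      omega

theorem block_bound (G : Multigraph) (A : Set G.V) (k q : ℕ) (z : Fin q → G.V)
    (hz : ∀ e, ¬ ((G.ends e).1 ∈ A ↔ (G.ends e).2 ∈ A) → (G.ends e).1 ∈ Set.range z)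
    (h : G.OW k) :
    ∃ ρ : G.V → ℕ, Function.Injective ρ ∧ ∃ T, BlockOrd G A ρ k ((q + 1) * (2 * k + 2)) T := by
  classical
  obtain ⟨T0, ρ0, hinj, hw⟩ := h
  obtain ⟨ρ, hρ, hlt, hpre⟩ := exists_rank T0 ρ0 hinj
  refine ⟨ρ, hρ, ?_⟩
  have hex : ∃ n, ∃ T, BlockOrd G A ρ k n T := by
    refine ⟨Nat.card G.V, ρ, hlt, fun u v e => by rw [hρ e], fun u v _ e => e, fun v => ?_⟩
    have : pre ρ ρ v = pre T0 ρ0 v := by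
      rw [← hpre]; ext u; simp only [pre, Set.mem_ofPred_eq]; omega
    rw [this]; exact hw v
  obtain ⟨T, hT⟩ := Nat.find_spec hex
  have hmin : ∀ m, m < Nat.find hex → ¬ ∃ T, BlockOrd G A ρ k m T := fun m hm => Nat.find_min hex hm
  set n := Nat.find hex with hn
  clear_value n
  by_cases hnm : n ≤ (q + 1) * (2 * k + 2)
  · exact ⟨T, fun v => (hT.lt v).trans_le hnm, hT.mono, hT.cons, hT.width⟩
  exfalso
  push Not at hnm
  -- consecutive blocks are non-mergeable
  have hadj : ∀ i, i + 1 < n → ∃ u v, T u = i ∧ T v = i + 1 ∧ ¬ (u ∈ A ↔ v ∈ A) := by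
    intro i hi
    by_contra hcon
    push Not at hcon
    exact hmin (n - 1) (by omega) (hT.merge i hi (fun u v a b => by
      have := hcon u v a b; tauto))
  have hdiff : ∀ i, i + 1 < n → ∀ u v, T u = i → T v = i + 1 → ¬ (u ∈ A ↔ v ∈ A) := by
    intro i hi u v hu hv
    obtain ⟨u', v', hu', hv', hne⟩ := hadj i hi
    have h1 := hT.mono u u' (by omega)
    have h2 := hT.mono v v' (by omega)
    tauto
  have hsame : ∀ i, i + 2 < n → ∀ u v, T u = i → T v = i + 2 → (u ∈ A ↔ v ∈ A) := by
    intro i hi u v hu hv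
    obtain ⟨u', w, hu', hw', hne⟩ := hadj i (by omega)
    have h1 := hdiff i (by omega) u w hu hw'
    have h2 := hdiff (i + 1) (by omega) w v hw' hv
    tauto
  -- a boundary-free window
  obtain ⟨w, hwq, hwin⟩ : ∃ w, w ≤ q ∧ ∀ t, ¬ (1 + w * (2 * k + 2) ≤ T (z t) ∧
      T (z t) < 1 + (w + 1) * (2 * k + 2)) := by
    by_contra hcon
    push Not at hcon
    choose g hg using fun (w : Fin (q + 1)) => hcon w.1 (Nat.lt_succ_iff.1 w.2)
    have hginj : Function.Injective g := by
      intro a b hab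
      have h1 := hg a
      have h2 := hg b
      rw [hab] at h1
      have h3 : a.1 * (2 * k + 2) < (b.1 + 1) * (2 * k + 2) := by omega
      have h4 : b.1 * (2 * k + 2) < (a.1 + 1) * (2 * k + 2) := by omega
      have h5 := Nat.lt_of_mul_lt_mul_right h3
      have h6 := Nat.lt_of_mul_lt_mul_right h4
      ext; omega
    have := Fintype.card_le_of_injective g hginj
    simp at this
  have hcut : ∀ j, G.delta {u | T u < j} ≤ k := by
    intro j
    apply delta_down_le hT.width
    intro u v hv hu
    simp only [pre, Set.mem_ofPred_eq] at *
    omega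
  obtain ⟨j, hj, hj1, hj2⟩ := no_local_max k (fun j => G.delta {u | T u < 1 + w * (2 * k + 2) + j})
    (fun i _ => hcut _)
  have hle : (w + 1) * (2 * k + 2) ≤ (q + 1) * (2 * k + 2) := Nat.mul_le_mul_right _ (by omega)
  have hexp : (w + 1) * (2 * k + 2) = w * (2 * k + 2) + (2 * k + 2) := by ring
  set i := w * (2 * k + 2) + j with hi
  have hi2 : i + 2 < n := by omega
  refine hmin (n - 1) (by omega) (hT.swap i hi2 (hsame i hi2) (hdiff (i + 1) hi2)
    ?_ ?_ ?_)
  · intro e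
    constructor
    · rintro ⟨h1, h2⟩
      obtain ⟨t, ht⟩ := hz e (hdiff (i + 1) hi2 _ _ h1 h2)
      apply hwin t
      rw [ht]; omega
    · rintro ⟨h1, h2⟩
      obtain ⟨t, ht⟩ := hz e (fun hh => hdiff (i + 1) hi2 _ _ h2 h1 hh.symm)
      apply hwin t
      rw [ht]; omega
  · have e1 : 1 + w * (2 * k + 2) + j = i + 1 := by omega
    have e2 : 1 + w * (2 * k + 2) + (j + 1) = i + 2 := by omega
    simpa only [e1, e2] using hj1
  · have e1 : 1 + w * (2 * k + 2) + (j + 2) = i + 3 := by omega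
    have e2 : 1 + w * (2 * k + 2) + (j + 1) = i + 2 := by omega
    simpa only [e1, e2] using hj2

end Multigraph

namespace Multigraph

open Classical in
/-- Indicator of two propositions differing. -/
noncomputable def xr (p q : Prop) : ℤ := if (p ↔ q) then 0 else 1

theorem xr_nonneg (p q : Prop) : 0 ≤ xr p q := by unfold xr; split_ifs <;> simp

/-- Left injection into a join. -/
def jl {r : ℕ} {A B : Multigraph} (x : Fin r → A.V) (y : Fin r → B.V) (a : A.V) :
    (join A B x y).V := Sum.inl a

/-- Right injection into a join. -/
def jr {r : ℕ} {A B : Multigraph} (x : Fin r → A.V) (y : Fin r → B.V) (b : B.V) :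
    (join A B x y).V := Sum.inr b

/-- Functions on a join. -/
def jelim {r : ℕ} {A B : Multigraph} (x : Fin r → A.V) (y : Fin r → B.V) {α : Type}
    (f : A.V → α) (g : B.V → α) : (join A B x y).V → α := Sum.elim f g

theorem jelim_l {r : ℕ} {A B : Multigraph} (x : Fin r → A.V) (y : Fin r → B.V) {α : Type}
    (f : A.V → α) (g : B.V → α) (a : A.V) : jelim x y f g (jl x y a) = f a := rfl

theorem jelim_r {r : ℕ} {A B : Multigraph} (x : Fin r → A.V) (y : Fin r → B.V) {α : Type}
    (f : A.V → α) (g : B.V → α) (b : B.V) : jelim x y f g (jr x y b) = g b := rfl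

theorem jcases {r : ℕ} {A B : Multigraph} (x : Fin r → A.V) (y : Fin r → B.V)
    (v : (join A B x y).V) : (∃ a, v = jl x y a) ∨ (∃ b, v = jr x y b) := by
  rcases v with a | b
  · exact Or.inl ⟨a, rfl⟩
  · exact Or.inr ⟨b, rfl⟩

theorem jl_inj {r : ℕ} {A B : Multigraph} (x : Fin r → A.V) (y : Fin r → B.V) :
    Function.Injective (jl x y) := fun _ _ h => Sum.inl_injective h

theorem jr_inj {r : ℕ} {A B : Multigraph} (x : Fin r → A.V) (y : Fin r → B.V) :
    Function.Injective (jr x y) := fun _ _ h => Sum.inr_injective h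

theorem jl_ne_jr {r : ℕ} {A B : Multigraph} (x : Fin r → A.V) (y : Fin r → B.V) (a : A.V)
    (b : B.V) : jl x y a ≠ jr x y b := fun h => by cases h

theorem delta_join {r : ℕ} {A B : Multigraph} (x : Fin r → A.V) (y : Fin r → B.V)
    (S : Set (join A B x y).V) (SA : Set A.V) (SB : Set B.V)
    (hA : ∀ a, a ∈ SA ↔ jl x y a ∈ S) (hB : ∀ b, b ∈ SB ↔ jr x y b ∈ S) :
    ((join A B x y).delta S : ℤ) = A.delta SA + B.delta SB
      + ∑ t, xr (x t ∈ SA) (y t ∈ SB) := by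
  classical
  obtain rfl : SA = {a | jl x y a ∈ S} := Set.ext hA
  obtain rfl : SB = {a | jr x y a ∈ S} := Set.ext hB
  simp only [delta_eq]
  have e1 : ∀ f : (join A B x y).E → ℤ, ∑ e, f e
      = ∑ e : (A.E ⊕ B.E) ⊕ Fin r, f e := by
    intro f
    have hs : (join A B x y).instFintypeE = instFintypeSum (A.E ⊕ B.E) (Fin r) :=
      Subsingleton.elim _ _
    rw [hs]
    rfl
  rw [e1]
  have e2 := Fintype.sum_sum_type (fun e : (A.E ⊕ B.E) ⊕ Fin r => (join A B x y).cr S e)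
  have e3 := Fintype.sum_sum_type (fun e : (A.E ⊕ B.E) => (join A B x y).cr S (Sum.inl e))
  refine e2.trans ?_
  refine (congrArg (· + _) e3).trans ?_
  rfl

/-- Interfaces. -/
abbrev IF (r m k : ℕ) : Type :=
  ((Fin r → Fin m) × (Fin r → Fin m)) × ((Fin m → Fin (k + 1)) × (Fin m → Fin (k + 1)))

/-- `A` conforms with the interface as a left part. -/
def ConfA {r m k : ℕ} (A : Multigraph) (x : Fin r → A.V) (I : IF r m k) : Prop :=
  ∃ T ρ : A.V → ℕ, Function.Injective ρ ∧ (∀ t, T (x t) = (I.1.1 t : ℕ)) ∧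
    (∀ v, T v < m) ∧
    (∀ j : Fin m, A.delta {v | T v ≤ j} = (I.2.2 j : ℕ)) ∧
    ∀ v, ∀ j : Fin m, T v = j →
      (A.delta (pre T ρ v) : ℤ) + ∑ t, xr (x t ∈ pre T ρ v) ((I.1.2 t : ℕ) < j) + (I.2.1 j : ℕ) ≤ k

/-- `B` conforms with the interface as a right part. -/
def ConfB {r m k : ℕ} (B : Multigraph) (y : Fin r → B.V) (I : IF r m k) : Prop :=
  ∃ T ρ : B.V → ℕ, Function.Injective ρ ∧ (∀ t, T (y t) = (I.1.2 t : ℕ)) ∧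
    (∀ v, T v < m) ∧
    (∀ j : Fin m, B.delta {v | T v < j} = (I.2.1 j : ℕ)) ∧
    ∀ v, ∀ j : Fin m, T v = j →
      (B.delta (pre T ρ v) : ℤ) + ∑ t, xr ((I.1.1 t : ℕ) ≤ j) (y t ∈ pre T ρ v) + (I.2.2 j : ℕ) ≤ k

theorem glue {r m k : ℕ} {A B : Multigraph} {x : Fin r → A.V} {y : Fin r → B.V} (I : IF r m k)
    (hA : ConfA A x I) (hB : ConfB B y I) : (join A B x y).OW k := by
  obtain ⟨TA, ρA, hiA, hxA, hmA, hcA, hwA⟩ := hA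
  obtain ⟨TB, ρB, hiB, hyB, hmB, hcB, hwB⟩ := hB
  refine ⟨jelim x y (fun v => 2 * TA v) (fun v => 2 * TB v + 1), jelim x y ρA ρB, ?_, ?_⟩
  · intro u v huv
    simp only [Prod.mk.injEq] at huv
    obtain ⟨h1, h2⟩ := huv
    rcases jcases x y u with ⟨u, rfl⟩ | ⟨u, rfl⟩ <;> rcases jcases x y v with ⟨v, rfl⟩ | ⟨v, rfl⟩ <;>
      simp only [jelim_l, jelim_r] at h1 h2
    · rw [hiA h2]
    · omega
    · omega
    · rw [hiB h2]
  · intro v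
    rcases jcases x y v with ⟨v, rfl⟩ | ⟨v, rfl⟩
    · have h0 := delta_join x y (pre (jelim x y (fun v => 2 * TA v) (fun v => 2 * TB v + 1))
          (jelim x y ρA ρB) (jl x y v)) (pre TA ρA v) {u | TB u < TA v}
        (by intro u; simp only [pre, Set.mem_ofPred_eq, jelim_l]; omega)
        (by intro u; simp only [pre, Set.mem_ofPred_eq, jelim_l, jelim_r]; omega)
      have h3 := hwA v ⟨TA v, hmA v⟩ rfl
      have h4 := hcB ⟨TA v, hmA v⟩
      simp only at h3 h4
      rw [h4] at h0
      simp only [Set.mem_ofPred_eq, hyB] at h0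
      have : ((join A B x y).delta (pre (jelim x y (fun v => 2 * TA v) (fun v => 2 * TB v + 1))
          (jelim x y ρA ρB) (jl x y v)) : ℤ) ≤ k := by linarith
      exact_mod_cast this
    · have h0 := delta_join x y (pre (jelim x y (fun v => 2 * TA v) (fun v => 2 * TB v + 1))
          (jelim x y ρA ρB) (jr x y v)) {u | TA u ≤ TB v} (pre TB ρB v)
        (by intro u; simp only [pre, Set.mem_ofPred_eq, jelim_l, jelim_r]; omega)
        (by intro u; simp only [pre, Set.mem_ofPred_eq, jelim_r]; omega)
      have h3 := hwB v ⟨TB v, hmB v⟩ rfl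
      have h4 := hcA ⟨TB v, hmB v⟩
      simp only at h3 h4
      rw [h4] at h0
      simp only [Set.mem_ofPred_eq, hxA] at h0
      have : ((join A B x y).delta (pre (jelim x y (fun v => 2 * TA v) (fun v => 2 * TB v + 1))
          (jelim x y ρA ρB) (jr x y v)) : ℤ) ≤ k := by linarith
      exact_mod_cast this

theorem unglue {r m k : ℕ} {A B : Multigraph} {x : Fin r → A.V} {y : Fin r → B.V}
    (hm : (r + 1) * (2 * k + 2) ≤ m)
    (h : (join A B x y).OW k) : ∃ I : IF r m k, ConfA A x I ∧ ConfB B y I := by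
  classical
  obtain ⟨ρ, hρ, T, hT⟩ := block_bound (join A B x y) (Set.range (jl x y)) k r
    (fun t => jl x y (x t))
    (by
      rintro ((e | e) | t) he
      · exact absurd (iff_of_true ⟨_, rfl⟩ ⟨_, rfl⟩) he
      · exfalso
        apply he
        apply iff_of_false <;> rintro ⟨_, h⟩ <;> cases h
      · exact ⟨t, rfl⟩) h
  have hlt : ∀ v, T v < m := fun v => (hT.lt v).trans_le hm
  have hmono : ∀ u v, T (jl x y u) ≠ T (jr x y v) := by
    intro u v e
    have := (hT.mono _ _ e).1 ⟨u, rfl⟩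
    obtain ⟨_, h⟩ := this
    cases h
  have hD : ∀ j, (join A B x y).delta {v | T v < j} ≤ k := by
    intro j
    apply delta_down_le hT.width
    intro u v hv hu
    simp only [pre, Set.mem_ofPred_eq] at *
    omega
  have hDZ : ∀ j, ((join A B x y).delta {v | T v < j} : ℤ) ≤ k := by
    intro j; exact_mod_cast hD j
  have hwZ : ∀ v, ((join A B x y).delta (pre T ρ v) : ℤ) ≤ k := by
    intro j; exact_mod_cast hT.width j
  have hxn : ∀ (SA : Set A.V) (SB : Set B.V), 0 ≤ ∑ t, xr (x t ∈ SA) (y t ∈ SB) :=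
    fun _ _ => Finset.sum_nonneg (fun t _ => xr_nonneg _ _)
  have hcA : ∀ j, A.delta {v | T (jl x y v) ≤ j} ≤ k := by
    intro j
    have h1 := hDZ (j + 1)
    have h0 := delta_join x y {v | T v < j + 1} {v | T (jl x y v) ≤ j} {v | T (jr x y v) ≤ j}
      (by intro a; simp only [Set.mem_ofPred_eq]; omega)
      (by intro a; simp only [Set.mem_ofPred_eq]; omega)
    have h2 := hxn {v | T (jl x y v) ≤ j} {v | T (jr x y v) ≤ j}
    have : (A.delta {v | T (jl x y v) ≤ j} : ℤ) ≤ k := by linarith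
    exact_mod_cast this
  have hcB : ∀ j, B.delta {v | T (jr x y v) < j} ≤ k := by
    intro j
    have h1 := hDZ j
    have h0 := delta_join x y {v | T v < j} {v | T (jl x y v) < j} {v | T (jr x y v) < j}
      (fun _ => Iff.rfl) (fun _ => Iff.rfl)
    have h2 := hxn {v | T (jl x y v) < j} {v | T (jr x y v) < j}
    have : (B.delta {v | T (jr x y v) < j} : ℤ) ≤ k := by linarith
    exact_mod_cast this
  refine ⟨((fun t => ⟨T (jl x y (x t)), hlt _⟩, fun t => ⟨T (jr x y (y t)), hlt _⟩),
    (fun j => ⟨B.delta {v | T (jr x y v) < j}, Nat.lt_succ_of_le (hcB j)⟩,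
     fun j => ⟨A.delta {v | T (jl x y v) ≤ j}, Nat.lt_succ_of_le (hcA j)⟩)), ?_, ?_⟩
  · refine ⟨fun v => T (jl x y v), fun v => ρ (jl x y v), fun u v e => jl_inj x y (hρ e),
      fun t => rfl, fun v => hlt _, fun j => rfl, ?_⟩
    intro v j hj
    have hj : T (jl x y v) = j := hj
    have h1 := hwZ (jl x y v)
    have h0 := delta_join x y (pre T ρ (jl x y v))
      (pre (fun v => T (jl x y v)) (fun v => ρ (jl x y v)) v) {u | T (jr x y u) < j}
      (fun _ => Iff.rfl)
      (by
        intro u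
        have := hmono v u
        simp only [pre, Set.mem_ofPred_eq]
        omega)
    simp only [Set.mem_ofPred_eq] at h0 ⊢
    linarith
  · refine ⟨fun v => T (jr x y v), fun v => ρ (jr x y v), fun u v e => jr_inj x y (hρ e),
      fun t => rfl, fun v => hlt _, fun j => rfl, ?_⟩
    intro v j hj
    have hj : T (jr x y v) = j := hj
    have h1 := hwZ (jr x y v)
    have h0 := delta_join x y (pre T ρ (jr x y v)) {u | T (jl x y u) ≤ j}
      (pre (fun v => T (jr x y v)) (fun v => ρ (jr x y v)) v)
      (by
        intro u
        have := hmono u v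
        simp only [pre, Set.mem_ofPred_eq]
        omega) (fun _ => Iff.rfl)
    simp only [Set.mem_ofPred_eq] at h0 ⊢
    linarith

end Multigraph

namespace Multigraph

open Classical in
/-- Indicator of a proposition. -/
noncomputable def ind (p : Prop) : ℤ := if p then 1 else 0

theorem ind_true {p : Prop} (h : p) : ind p = 1 := by simp [ind, h]
theorem ind_false {p : Prop} (h : ¬ p) : ind p = 0 := by simp [ind, h]

/-- Net flow of `f` out of `R`. -/
noncomputable def net (G : Multigraph) (f : G.E → ℤ) (R : Set G.V) : ℤ :=
  ∑ e, f e * (ind ((G.ends e).1 ∈ R) - ind ((G.ends e).2 ∈ R))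

theorem net_term_le (G : Multigraph) (f : G.E → ℤ) (hf : ∀ e, |f e| ≤ 1) (R : Set G.V) (e : G.E) :
    f e * (ind ((G.ends e).1 ∈ R) - ind ((G.ends e).2 ∈ R)) ≤ G.cr R e := by
  have := abs_le.1 (hf e)
  unfold ind cr
  by_cases h1 : (G.ends e).1 ∈ R <;> by_cases h2 : (G.ends e).2 ∈ R <;> simp [h1, h2] <;> omega

theorem net_le_delta (G : Multigraph) (f : G.E → ℤ) (hf : ∀ e, |f e| ≤ 1) (R : Set G.V) :
    G.net f R ≤ G.delta R := by
  rw [delta_eq]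
  exact Finset.sum_le_sum (fun e _ => net_term_le G f hf R e)

theorem net_tight (G : Multigraph) (f : G.E → ℤ) (hf : ∀ e, |f e| ≤ 1) (R : Set G.V)
    (h : G.delta R ≤ G.net f R) (e : G.E) :
    f e * (ind ((G.ends e).1 ∈ R) - ind ((G.ends e).2 ∈ R)) = G.cr R e := by
  have h2 : G.net f R = ∑ e, G.cr R e := by
    rw [← delta_eq]
    exact le_antisymm (net_le_delta G f hf R) h
  exact (Finset.sum_eq_sum_iff_of_le (fun e _ => net_term_le G f hf R e)).1 h2 e (Finset.mem_univ _)

open Classical in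
theorem net_add_single (G : Multigraph) (f : G.E → ℤ) (e : G.E) (s : ℤ) (R : Set G.V) :
    G.net (fun e' => if e' = e then f e' + s else f e') R
      = G.net f R + s * (ind ((G.ends e).1 ∈ R) - ind ((G.ends e).2 ∈ R)) := by
  unfold net
  have : ∀ e', (if e' = e then f e' + s else f e') *
      (ind ((G.ends e').1 ∈ R) - ind ((G.ends e').2 ∈ R))
      = f e' * (ind ((G.ends e').1 ∈ R) - ind ((G.ends e').2 ∈ R))
        + if e' = e then s * (ind ((G.ends e).1 ∈ R) - ind ((G.ends e).2 ∈ R)) else 0 := by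
    intro e'
    split_ifs with h
    · subst h; ring
    · ring
  simp only [this, Finset.sum_add_distrib]
  simp

/-- Reachability witness for augmentation. -/
def Reach (G : Multigraph) (f : G.E → ℤ) (P R : Set G.V) (w : G.V) : Prop :=
  ∃ u ∈ P, ∃ f' : G.E → ℤ, (∀ e, |f' e| ≤ 1) ∧
    (∀ S, G.net f' S = G.net f S + ind (u ∈ S) - ind (w ∈ S)) ∧
    ∀ e, ¬ ((G.ends e).1 ∈ R ∧ (G.ends e).2 ∈ R) → f' e = f e

theorem flow_exists (G : Multigraph) (P P' : Set G.V) (hPP : P ⊆ P')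
    (heq : G.delta P = G.delta P')
    (hmin : ∀ S, P ⊆ S → S ⊆ P' → G.delta P ≤ G.delta S) :
    ∃ f : G.E → ℤ, (∀ e, |f e| ≤ 1) ∧ (∀ S, P ⊆ S → S ⊆ P' → G.net f S = G.net f P) ∧
      (∀ e, f e * (ind ((G.ends e).1 ∈ P) - ind ((G.ends e).2 ∈ P)) = G.cr P e) ∧
      (∀ e, f e * (ind ((G.ends e).1 ∈ P') - ind ((G.ends e).2 ∈ P')) = G.cr P' e) := by
  classical
  obtain ⟨z, ⟨f, hf, hcons, hz⟩, hmax⟩ := Int.exists_greatest_of_bdd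
    (P := fun z => ∃ f : G.E → ℤ, (∀ e, |f e| ≤ 1) ∧
      (∀ S, P ⊆ S → S ⊆ P' → G.net f S = G.net f P) ∧ G.net f P = z)
    ⟨G.delta P, by rintro z ⟨f, hf, -, rfl⟩; exact net_le_delta G f hf P⟩
    ⟨0, fun _ => 0, by simp, by simp [net], by simp [net]⟩
  obtain ⟨R, hR⟩ := Set.Finite.exists_maximal
    (s := {R : Set G.V | P ⊆ R ∧ ∀ w ∈ R, Reach G f P R w}) (Set.toFinite _)
    ⟨P, subset_rfl, fun w hw => ⟨w, hw, f, hf, by intro S; ring, fun _ _ => rfl⟩⟩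
  obtain ⟨⟨hPR, hreach⟩, hRmax⟩ := hR
  have hRP : R ⊆ P' := by
    intro w hw
    by_contra hwP
    obtain ⟨u, hu, f', hf', hnet, -⟩ := hreach w hw
    have hS : ∀ S, P ⊆ S → S ⊆ P' → G.net f' S = G.net f S + 1 := by
      intro S h1 h2
      rw [hnet, ind_true (h1 hu), ind_false (fun h => hwP (h2 h))]; ring
    have := hmax (z + 1) ⟨f', hf', fun S h1 h2 => by
      rw [hS S h1 h2, hS P subset_rfl hPP, hcons S h1 h2], by rw [hS P subset_rfl hPP, hz]⟩
    omega
  have hstep : ∀ w w' e s, w ∈ R → w' ∉ R → (s = 1 ∨ s = -1) → |f e + s| ≤ 1 →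
      (∀ S : Set G.V, s * (ind ((G.ends e).1 ∈ S) - ind ((G.ends e).2 ∈ S)) = ind (w ∈ S) - ind (w' ∈ S)) →
      (((G.ends e).1 = w ∧ (G.ends e).2 = w') ∨ ((G.ends e).1 = w' ∧ (G.ends e).2 = w)) → False := by
    intro w w' e s hw hw' hs hfs hS hends
    have hin : insert w' R ∈ {R : Set G.V | P ⊆ R ∧ ∀ w ∈ R, Reach G f P R w} := by
      refine ⟨hPR.trans (Set.subset_insert _ _), ?_⟩
      intro w0 hw0
      rcases hw0 with rfl | hw0
      · obtain ⟨u, hu, f', hf', hnet, hag⟩ := hreach w hw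
        have hfe : f' e = f e := hag e (by
          rintro ⟨h1, h2⟩
          rcases hends with ⟨h3, h4⟩ | ⟨h3, h4⟩
          · rw [h4] at h2; exact hw' h2
          · rw [h3] at h1; exact hw' h1)
        refine ⟨u, hu, fun e' => if e' = e then f' e' + s else f' e', ?_, ?_, ?_⟩
        · intro e'
          dsimp only
          split_ifs with h
          · subst h; rw [hfe]; exact hfs
          · exact hf' e'
        · intro S
          rw [net_add_single, hnet, hS]; ring
        · intro e' he'
          have hne : e' ≠ e := by
            rintro rfl
            apply he'
            rcases hends with ⟨h3, h4⟩ | ⟨h3, h4⟩ <;> rw [h3, h4] <;> simp [hw]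
          simp only [hne, if_false]
          apply hag
          rintro ⟨h1, h2⟩
          exact he' ⟨Or.inr h1, Or.inr h2⟩
      · obtain ⟨u, hu, f', hf', hnet, hag⟩ := hreach w0 hw0
        refine ⟨u, hu, f', hf', hnet, fun e' he' => hag e' ?_⟩
        rintro ⟨h1, h2⟩
        exact he' ⟨Or.inr h1, Or.inr h2⟩
    exact hw' (hRmax hin (Set.subset_insert _ _) (Set.mem_insert _ _))
  have hsat : ∀ e, f e * (ind ((G.ends e).1 ∈ R) - ind ((G.ends e).2 ∈ R)) = G.cr R e := by
    intro e
    have hab := abs_le.1 (hf e)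
    by_cases h1 : (G.ends e).1 ∈ R <;> by_cases h2 : (G.ends e).2 ∈ R
    · simp [ind, cr, h1, h2]
    · have : f e = 1 := by
        by_contra hne
        exact hstep _ _ e 1 h1 h2 (Or.inl rfl) (abs_le.2 ⟨by omega, by omega⟩)
          (fun S => by ring) (Or.inl ⟨rfl, rfl⟩)
      simp [ind, cr, h1, h2, this]
    · have : f e = -1 := by
        by_contra hne
        exact hstep _ _ e (-1) h2 h1 (Or.inr rfl) (abs_le.2 ⟨by omega, by omega⟩)
          (fun S => by ring) (Or.inr ⟨rfl, rfl⟩)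
      simp [ind, cr, h1, h2, this]
    · simp [ind, cr, h1, h2]
  have hnR : G.net f R = G.delta R := by
    rw [delta_eq]; exact Finset.sum_congr rfl (fun e _ => hsat e)
  have hnP := hcons R hPR hRP
  have hdR := hmin R hPR hRP
  have hnP' := hcons P' hPP subset_rfl
  exact ⟨f, hf, hcons, net_tight G f hf P (by omega), net_tight G f hf P' (by omega)⟩

/-- Decomposition of a balanced arc set into walks. -/
theorem tokens (G : Multigraph) (src dst : G.E → G.V)
    (hsd : ∀ e, G.ends e = (src e, dst e) ∨ G.ends e = (dst e, src e)) (r : ℕ) (n : ℕ) :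
    ∀ (D : Finset G.E), D.card = n → ∀ p q : Fin r → G.V,
      (∀ v, ∑ t, ind (p t = v) - ∑ t, ind (q t = v)
        = ∑ e ∈ D, (ind (src e = v) - ind (dst e = v))) →
      ∃ π : Equiv.Perm (Fin r), ∃ L : Fin r → List G.E,
        (∀ t, ∃ w : G.Walk (p t) (q (π t)), w.edges = L t ∧
          ∀ v ∈ w.support, v = p t ∨ ∃ e ∈ D, dst e = v) ∧
        (∀ t, ∀ e ∈ L t, e ∈ D) ∧ ∀ t t', t ≠ t' → ∀ e ∈ L t, e ∉ L t' := by
  classical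
  induction n with
  | zero => ?_
  | succ n ih => ?_
  all_goals
    intro D hD p q hbal
    by_cases hmv : ∃ t, ∃ e ∈ D, src e = p t
    swap
    · push Not at hmv
      have hle : ∀ v, ∑ t, ind (p t = v) ≤ ∑ t, ind (q t = v) := by
        intro v
        have hq0 : 0 ≤ ∑ t, ind (q t = v) :=
          Finset.sum_nonneg (fun t _ => by unfold ind; split_ifs <;> simp)
        by_cases hv : ∃ t, p t = v
        · obtain ⟨t, rfl⟩ := hv
          have hb := hbal (p t)
          have : ∑ e ∈ D, (ind (src e = p t) - ind (dst e = p t)) ≤ 0 := by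
            apply Finset.sum_nonpos
            intro e he
            rw [ind_false (hmv t e he)]
            unfold ind; split_ifs <;> simp
          linarith
        · have : ∑ t, ind (p t = v) = 0 :=
            Finset.sum_eq_zero (fun t _ => ind_false (fun h => hv ⟨t, h⟩))
          rw [this]; exact hq0
      have hcount : ∀ (g : Fin r → G.V) v,
          ((Fintype.card {t // g t = v} : ℕ) : ℤ) = ∑ t, ind (g t = v) := by
        intro g v
        rw [Fintype.card_subtype]
        simp [ind, Finset.sum_ite]
      have hemb : ∀ v, Nonempty ({t // p t = v} ↪ {t // q t = v}) := by
        intro v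
        apply Function.Embedding.nonempty_of_card_le
        have := hle v
        rw [← hcount, ← hcount] at this
        exact_mod_cast this
      have ι := fun v => (hemb v).some
      have hinj : Function.Injective (fun t => (ι (p t) ⟨t, rfl⟩).1) := by
        intro t t' htt
        have key : ∀ v (h : p t' = v), (ι v ⟨t', h⟩).1 = (ι (p t') ⟨t', rfl⟩).1 := by
          intro v h; subst h; rfl
        have hpp : p t' = p t := by
          rw [← (ι (p t') ⟨t', rfl⟩).2, ← (ι (p t) ⟨t, rfl⟩).2]
          exact congrArg q htt.symm
        have h2 := htt.trans (key _ hpp).symm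
        have h3 := (ι (p t)).injective (Subtype.ext h2)
        exact congrArg Subtype.val h3
      have hbij := Finite.injective_iff_bijective.1 hinj
      obtain ⟨π, hπ0⟩ : ∃ π : Equiv.Perm (Fin r), ∀ t, π t = (ι (p t) ⟨t, rfl⟩).1 :=
        ⟨Equiv.ofBijective _ hbij, fun t => rfl⟩
      have hπ : ∀ t, p t = q (π t) := by
        intro t
        rw [hπ0]
        exact (ι (p t) ⟨t, rfl⟩).2.symm
      refine ⟨π, fun _ => [], ?_, by simp, by simp⟩
      intro t
      rw [← hπ t]
      exact ⟨.nil _, rfl, by intro v hv; left; simpa [Walk.support] using hv⟩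
  · exfalso
    obtain ⟨t, e, he, -⟩ := hmv
    rw [Finset.card_eq_zero] at hD
    simp [hD] at he
  · obtain ⟨t, e, he, hsrc⟩ := hmv
    obtain ⟨π, L, hW, hLD, hdisj⟩ := ih (D.erase e) (by rw [Finset.card_erase_of_mem he, hD]; rfl)
      (Function.update p t (dst e)) q (by
        intro v
        have hb := hbal v
        rw [← Finset.add_sum_erase _ _ he] at hb
        have h1 : ∑ s, ind (Function.update p t (dst e) s = v)
            = ∑ s, ind (p s = v) - ind (p t = v) + ind (dst e = v) := by
          rw [← Finset.add_sum_erase _ _ (Finset.mem_univ t),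
            ← Finset.add_sum_erase _ (fun s => ind (p s = v)) (Finset.mem_univ t)]
          have : ∑ s ∈ Finset.univ.erase t, ind (Function.update p t (dst e) s = v)
              = ∑ s ∈ Finset.univ.erase t, ind (p s = v) := by
            apply Finset.sum_congr rfl
            intro s hs
            rw [Function.update_of_ne (Finset.ne_of_mem_erase hs)]
          rw [this, Function.update_self]
          ring
        rw [h1]
        rw [hsrc] at hb
        linarith)
    have hnotin : ∀ s, e ∉ L s := fun s hs => (Finset.mem_erase.1 (hLD s e hs)).1 rfl
    refine ⟨π, Function.update L t (e :: L t), ?_, ?_, ?_⟩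
    · intro s
      by_cases hst : s = t
      · subst hst
        have hWs := hW s
        rw [Function.update_self] at hWs ⊢
        obtain ⟨w, hw, hsup⟩ := hWs
        refine ⟨.cons e (by rw [← hsrc]; exact hsd e) w, by rw [Walk.edges, hw], ?_⟩
        intro v hv
        rw [Walk.support] at hv
        rcases List.mem_cons.1 hv with rfl | hv
        · exact Or.inl rfl
        · right
          rcases hsup v hv with rfl | ⟨e', he', h⟩
          · exact ⟨e, he, rfl⟩
          · exact ⟨e', Finset.mem_of_mem_erase he', h⟩
      · have hWs := hW s
        rw [Function.update_of_ne hst] at hWs ⊢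
        obtain ⟨w, hw, hsup⟩ := hWs
        refine ⟨w, hw, fun v hv => ?_⟩
        rcases hsup v hv with rfl | ⟨e', he', h⟩
        · exact Or.inl rfl
        · exact Or.inr ⟨e', Finset.mem_of_mem_erase he', h⟩
    · intro s e' he'
      by_cases hst : s = t
      · subst hst
        rw [Function.update_self] at he'
        rcases List.mem_cons.1 he' with rfl | h
        · exact he
        · exact Finset.mem_of_mem_erase (hLD _ _ h)
      · rw [Function.update_of_ne hst] at he'
        exact Finset.mem_of_mem_erase (hLD _ _ he')
    · intro s s' hss e' h1 h2
      by_cases hst : s = t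
      · subst hst
        rw [Function.update_self] at h1
        rw [Function.update_of_ne (Ne.symm hss)] at h2
        rcases List.mem_cons.1 h1 with rfl | h
        · exact hnotin _ h2
        · exact hdisj _ _ hss _ h h2
      · rw [Function.update_of_ne hst] at h1
        by_cases hst' : s' = t
        · subst hst'
          rw [Function.update_self] at h2
          rcases List.mem_cons.1 h2 with rfl | h
          · exact hnotin _ h1
          · exact hdisj _ _ hss _ h1 h
        · rw [Function.update_of_ne hst'] at h2
          exact hdisj _ _ hss _ h1 h2

end Multigraph

namespace Multigraph

theorem Walk.suffix {G : Multigraph} {u v : G.V} (p : G.Walk u v) (x : G.V) (hx : x ∈ p.support)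
    (hn : p.support.Nodup) :
    ∃ q : G.Walk x v, q.support.Nodup ∧ (∀ y ∈ q.support, y ∈ p.support) ∧
      ∀ e ∈ q.edges, e ∈ p.edges := by
  induction p with
  | nil v =>
    simp only [Walk.support, List.mem_singleton] at hx
    subst hx
    exact ⟨.nil _, hn, fun _ h => h, fun _ h => h⟩
  | @cons a b c e h p ih =>
    by_cases hxa : x = a
    · subst hxa
      exact ⟨.cons e h p, hn, fun _ h => h, fun _ h => h⟩
    · simp only [Walk.support, List.mem_cons, hxa, false_or, List.nodup_cons] at hx hn
      obtain ⟨q, h1, h2, h3⟩ := ih hx hn.2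
      exact ⟨q, h1, fun y hy => List.mem_cons_of_mem _ (h2 y hy),
        fun y hy => List.mem_cons_of_mem _ (h3 y hy)⟩

theorem Walk.toPath {G : Multigraph} {u v : G.V} (p : G.Walk u v) :
    ∃ q : G.Walk u v, q.support.Nodup ∧ (∀ y ∈ q.support, y ∈ p.support) ∧
      ∀ e ∈ q.edges, e ∈ p.edges := by
  induction p with
  | nil v => exact ⟨.nil _, by simp [Walk.support], fun _ h => h, fun _ h => h⟩
  | @cons a b c e h p ih =>
    obtain ⟨q, h1, h2, h3⟩ := ih
    by_cases ha : a ∈ q.support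
    · obtain ⟨q', k1, k2, k3⟩ := q.suffix a ha h1
      exact ⟨q', k1, fun y hy => List.mem_cons_of_mem _ (h2 y (k2 y hy)),
        fun y hy => List.mem_cons_of_mem _ (h3 y (k3 y hy))⟩
    · refine ⟨.cons e h q, List.nodup_cons.2 ⟨ha, h1⟩, ?_, ?_⟩
      · intro y hy
        rcases List.mem_cons.1 hy with rfl | hy
        · exact List.mem_cons_self
        · exact List.mem_cons_of_mem _ (h2 y hy)
      · intro y hy
        rcases List.mem_cons.1 hy with rfl | hy
        · exact List.mem_cons_self
        · exact List.mem_cons_of_mem _ (h3 y hy)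

theorem Walk.snoc {G : Multigraph} {u v w : G.V} (p : G.Walk u v) (e : G.E)
    (h : G.ends e = (v, w) ∨ G.ends e = (w, v)) :
    ∃ q : G.Walk u w, q.support = p.support ++ [w] ∧ q.edges = p.edges ++ [e] := by
  induction p with
  | nil v => exact ⟨.cons e h (.nil _), rfl, rfl⟩
  | @cons a b c f hf p ih =>
    obtain ⟨q, h1, h2⟩ := ih h
    exact ⟨.cons f hf q, by simp [Walk.support, h1], by simp [Walk.edges, h2]⟩

theorem Walk.crosses {G : Multigraph} {u v : G.V} (p : G.Walk u v) (S : Set G.V)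
    (h : ¬ (u ∈ S ↔ v ∈ S)) : ∃ e ∈ p.edges, ¬ ((G.ends e).1 ∈ S ↔ (G.ends e).2 ∈ S) := by
  induction p with
  | nil v => exact absurd Iff.rfl h
  | @cons a b c e he p ih =>
    by_cases hab : a ∈ S ↔ b ∈ S
    · obtain ⟨f, hf, hc⟩ := ih (fun hbc => h (hab.trans hbc))
      exact ⟨f, List.mem_cons_of_mem _ hf, hc⟩
    · refine ⟨e, List.mem_cons_self, ?_⟩
      rcases he with he | he <;> rw [he]
      · exact hab
      · exact fun h' => hab h'.symm

open Classical in
/-- The end of `e` inside `P`. -/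
noncomputable def inn (G : Multigraph) (P : Set G.V) (e : G.E) : G.V :=
  if (G.ends e).1 ∈ P then (G.ends e).1 else (G.ends e).2

open Classical in
/-- The end of `e` outside `P`. -/
noncomputable def out (G : Multigraph) (P : Set G.V) (e : G.E) : G.V :=
  if (G.ends e).1 ∈ P then (G.ends e).2 else (G.ends e).1

/-- Enumeration of the edges leaving `P`. -/
def Enum (G : Multigraph) (P : Set G.V) {r : ℕ} (e : Fin r → G.E) : Prop :=
  Function.Injective e ∧ ∀ e', e' ∈ Set.range e ↔ ¬ ((G.ends e').1 ∈ P ↔ (G.ends e').2 ∈ P)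

theorem Enum.crosses {G : Multigraph} {P : Set G.V} {r : ℕ} {e : Fin r → G.E} (h : Enum G P e)
    (t : Fin r) : ¬ ((G.ends (e t)).1 ∈ P ↔ (G.ends (e t)).2 ∈ P) := (h.2 _).1 ⟨t, rfl⟩

theorem Enum.inn_mem {G : Multigraph} {P : Set G.V} {r : ℕ} {e : Fin r → G.E} (h : Enum G P e)
    (t : Fin r) : G.inn P (e t) ∈ P := by
  have := h.crosses t
  unfold inn
  split_ifs with h1 <;> tauto

theorem Enum.out_mem {G : Multigraph} {P : Set G.V} {r : ℕ} {e : Fin r → G.E} (h : Enum G P e)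
    (t : Fin r) : G.out P (e t) ∉ P := by
  have := h.crosses t
  unfold out
  split_ifs with h1 <;> tauto

theorem ends_inn_out (G : Multigraph) (P : Set G.V) (e : G.E) :
    G.ends e = (G.inn P e, G.out P e) ∨ G.ends e = (G.out P e, G.inn P e) := by
  unfold inn out
  split_ifs
  · exact Or.inl rfl
  · exact Or.inr rfl

theorem enum_exists (G : Multigraph) (P : Set G.V) (r : ℕ) (h : G.delta P = r) :
    ∃ e : Fin r → G.E, Enum G P e := by
  classical
  have hc : Nat.card {e : G.E | ¬ ((G.ends e).1 ∈ P ↔ (G.ends e).2 ∈ P)} = r := by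
    rw [← h]; rfl
  have eq := (Finite.equivFinOfCardEq hc).symm
  refine ⟨fun t => (eq t).1, fun a b hab => eq.injective (Subtype.ext hab), ?_⟩
  intro e'
  constructor
  · rintro ⟨t, rfl⟩; exact (eq t).2
  · intro he
    exact ⟨eq.symm ⟨e', he⟩, by simp⟩

theorem Enum.sum {G : Multigraph} {P : Set G.V} {r : ℕ} {e : Fin r → G.E} (h : Enum G P e)
    (g : G.E → ℤ) : ∑ t, g (e t) = ∑ e', G.cr P e' * g e' := by
  classical
  have h1 : ∑ t, g (e t) = ∑ e' ∈ Finset.univ.image e, g e' :=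
    (Finset.sum_image (fun a _ b _ hab => h.1 hab)).symm
  rw [h1]
  have h2 : Finset.univ.image e = Finset.univ.filter
      (fun e' => ¬ ((G.ends e').1 ∈ P ↔ (G.ends e').2 ∈ P)) := by
    ext e'
    rw [Finset.mem_filter, ← h.2]
    simp
  rw [h2, Finset.sum_filter]
  apply Finset.sum_congr rfl
  intro e' _
  unfold cr
  split_ifs <;> simp

theorem edge_balance (G : Multigraph) (P P' : Set G.V) (hPP : P ⊆ P') (f : G.E → ℤ) (a : G.E)
    (hval : f a = 0 ∨ f a = 1 ∨ f a = -1)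
    (hs : f a * (ind ((G.ends a).1 ∈ P) - ind ((G.ends a).2 ∈ P)) = G.cr P a)
    (hs' : f a * (ind ((G.ends a).1 ∈ P') - ind ((G.ends a).2 ∈ P')) = G.cr P' a) (v : G.V)
    (src dst : G.V) (D : Prop)
    (hsrc : (f a = 1 → src = (G.ends a).1) ∧ (f a = -1 → src = (G.ends a).2))
    (hdst : (f a = 1 → dst = (G.ends a).2) ∧ (f a = -1 → dst = (G.ends a).1))
    (hD : D ↔ (f a ≠ 0 ∧ (G.ends a).1 ∈ P' ∧
      (G.ends a).2 ∈ P' ∧ ¬ ((G.ends a).1 ∈ P ∧ (G.ends a).2 ∈ P))) :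
    G.cr P a * ind (G.inn P a = v) - G.cr P' a * ind (G.inn P' a = v)
      = ind D * (ind (src = v) - ind (dst = v))
        - ind (v ∈ P' ∧ v ∉ P) * (f a * (ind ((G.ends a).1 = v) - ind ((G.ends a).2 = v))) := by
  have hl := G.loopless a
  have hl2 := hl.symm
  have hA := @hPP (G.ends a).1
  have hB := @hPP (G.ends a).2
  have hC := @hPP v
  unfold cr inn ind at *
  generalize (G.ends a).1 = x at *
  generalize (G.ends a).2 = y at *
  generalize f a = z at *
  rcases hval with rfl | rfl | rfl
  · by_cases h1 : x ∈ P <;> by_cases h2 : y ∈ P <;> by_cases h3 : x ∈ P' <;> by_cases h4 : y ∈ P' <;>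
      simp_all
  · obtain rfl := hsrc.1 rfl
    obtain rfl := hdst.1 rfl
    by_cases h5 : src = v
    · subst h5
      by_cases h1 : src ∈ P <;> by_cases h2 : dst ∈ P <;> by_cases h3 : src ∈ P' <;>
        by_cases h4 : dst ∈ P' <;> simp_all
    · by_cases h6 : dst = v
      · subst h6
        by_cases h1 : src ∈ P <;> by_cases h2 : dst ∈ P <;> by_cases h3 : src ∈ P' <;>
          by_cases h4 : dst ∈ P' <;> simp_all
      · by_cases h1 : src ∈ P <;> by_cases h2 : dst ∈ P <;> by_cases h3 : src ∈ P' <;>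
          by_cases h4 : dst ∈ P' <;> simp_all
  · obtain rfl := hsrc.2 rfl
    obtain rfl := hdst.2 rfl
    by_cases h5 : src = v
    · subst h5
      by_cases h1 : src ∈ P <;> by_cases h2 : dst ∈ P <;> by_cases h3 : src ∈ P' <;>
        by_cases h4 : dst ∈ P' <;> simp_all
    · by_cases h6 : dst = v
      · subst h6
        by_cases h1 : src ∈ P <;> by_cases h2 : dst ∈ P <;> by_cases h3 : src ∈ P' <;>
          by_cases h4 : dst ∈ P' <;> simp_all
      · by_cases h1 : src ∈ P <;> by_cases h2 : dst ∈ P <;> by_cases h3 : src ∈ P' <;>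
          by_cases h4 : dst ∈ P' <;> simp_all

theorem linkage (G : Multigraph) (P P' : Set G.V) (hPP : P ⊆ P') (r : ℕ)
    (hr : G.delta P = r) (hr' : G.delta P' = r)
    (hmin : ∀ S, P ⊆ S → S ⊆ P' → r ≤ G.delta S) (e : Fin r → G.E) (he : Enum G P e) :
    ∃ e' : Fin r → G.E, Enum G P' e' ∧ ∃ L : Fin r → List G.E,
      (∀ t, ∃ w : G.Walk (G.inn P (e t)) (G.inn P' (e' t)), w.edges = L t ∧ w.support.Nodup ∧
        ∀ v ∈ w.support, v = G.inn P (e t) ∨ (v ∈ P' ∧ v ∉ P)) ∧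
      (∀ t, ∀ f ∈ L t, (G.ends f).1 ∈ P' ∧ (G.ends f).2 ∈ P' ∧
        ¬ ((G.ends f).1 ∈ P ∧ (G.ends f).2 ∈ P)) ∧
      ∀ t t', t ≠ t' → ∀ f ∈ L t, f ∉ L t' := by
  classical
  obtain ⟨f, hf, hcons, hs, hs'⟩ := flow_exists G P P' hPP (by omega) (by rw [hr]; exact hmin)
  obtain ⟨e0, he0⟩ := enum_exists G P' r hr'
  let src : G.E → G.V := fun a => if f a = 1 then (G.ends a).1 else (G.ends a).2
  let dst : G.E → G.V := fun a => if f a = 1 then (G.ends a).2 else (G.ends a).1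
  let D : Finset G.E := Finset.univ.filter (fun a => f a ≠ 0 ∧ (G.ends a).1 ∈ P' ∧
    (G.ends a).2 ∈ P' ∧ ¬ ((G.ends a).1 ∈ P ∧ (G.ends a).2 ∈ P))
  have hval : ∀ a, f a = 0 ∨ f a = 1 ∨ f a = -1 := by
    intro a
    have := abs_le.1 (hf a)
    omega
  have hdst : ∀ a ∈ D, dst a ∈ P' ∧ dst a ∉ P := by
    intro a ha
    obtain ⟨-, h0, h1, h2, h3⟩ := Finset.mem_filter.1 ha
    have hsa := hs a
    simp only [dst]
    rcases hval a with hv | hv | hv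
    · exact absurd hv h0
    · rw [if_pos hv]
      refine ⟨h2, fun h => ?_⟩
      have : (G.ends a).1 ∉ P := fun h' => h3 ⟨h', h⟩
      simp [ind, cr, this, h, hv] at hsa
    · rw [if_neg (by omega)]
      refine ⟨h1, fun h => ?_⟩
      have : (G.ends a).2 ∉ P := fun h' => h3 ⟨h, h'⟩
      simp [ind, cr, this, h, hv] at hsa
  have hnetv : ∀ v, v ∈ P' → v ∉ P → G.net f {v} = 0 := by
    intro v hv hvP
    have h1 := hcons (insert v P) (Set.subset_insert _ _) (Set.insert_subset hv hPP)
    have h2 : G.net f (insert v P) = G.net f {v} + G.net f P := by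
      unfold net
      rw [← Finset.sum_add_distrib]
      apply Finset.sum_congr rfl
      intro a _
      rw [← mul_add]
      congr 1
      have : ∀ x, ind (x ∈ insert v P) = ind (x ∈ ({v} : Set G.V)) + ind (x ∈ P) := by
        intro x
        unfold ind
        by_cases hxv : x = v
        · subst hxv; simp [hvP]
        · simp [hxv]
      rw [this, this]; ring
    omega
  obtain ⟨π, L, hW, hLD, hdisj⟩ := tokens G src dst
    (by
      intro a
      simp only [src, dst]
      split_ifs
      · exact Or.inl rfl
      · exact Or.inr rfl) r _ D rfl (fun t => G.inn P (e t)) (fun t => G.inn P' (e0 t))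
    (by
      intro v
      rw [he.sum (fun a => ind (G.inn P a = v)), he0.sum (fun a => ind (G.inn P' a = v)),
        Finset.sum_filter, ← Finset.sum_sub_distrib]
      have hz : ind (v ∈ P' ∧ v ∉ P) * G.net f {v} = 0 := by
        by_cases hvM : v ∈ P' ∧ v ∉ P
        · rw [hnetv v hvM.1 hvM.2, mul_zero]
        · rw [ind_false hvM, zero_mul]
      refine Eq.trans ?_ ((congrArg (_ - ·) hz).trans (sub_zero _))
      unfold net
      simp only [Set.mem_singleton_iff]
      rw [Finset.mul_sum, ← Finset.sum_sub_distrib]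
      apply Finset.sum_congr rfl
      intro a _
      rw [edge_balance G P P' hPP f a (hval a) (hs a) (hs' a) v (src a) (dst a) _ ?_ ?_ Iff.rfl]
      · congr 1
        unfold ind
        split_ifs <;> simp
      · simp only [src]
        refine ⟨fun h => if_pos h, fun h => if_neg (by omega)⟩
      · simp only [dst]
        refine ⟨fun h => if_pos h, fun h => if_neg (by omega)⟩)
  choose w hw hsup using hW
  choose w' hn' hsup' hed' using fun t => (w t).toPath
  refine ⟨fun t => e0 (π t), ⟨he0.1.comp π.injective, fun a => ?_⟩, fun t => (w' t).edges, ?_, ?_, ?_⟩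
  · rw [← he0.2 a]
    exact ⟨fun ⟨t, ht⟩ => ⟨π t, ht⟩, fun ⟨t, ht⟩ => ⟨π.symm t, by simpa using ht⟩⟩
  · intro t
    refine ⟨w' t, rfl, hn' t, fun v hv => ?_⟩
    rcases hsup t v (hsup' t v hv) with h | ⟨a, ha, rfl⟩
    · exact Or.inl h
    · exact Or.inr (hdst a ha)
  · intro t a ha
    have h1 := hLD t a (by rw [← hw t]; exact hed' t a ha)
    exact (Finset.mem_filter.1 h1).2.2
  · intro t t' htt a ha ha'
    have h1 : a ∈ L t := by rw [← hw t]; exact hed' t a ha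
    have h2 : a ∈ L t' := by rw [← hw t']; exact hed' t' a ha'
    exact hdisj t t' htt a h1 h2

end Multigraph

namespace Multigraph

/-- Vertex of an induced subgraph. -/
def iv {G : Multigraph} {P : Set G.V} (v : G.V) (h : v ∈ P) : (G.induce P).V := ⟨v, h⟩

/-- Underlying vertex. -/
def ival {G : Multigraph} {P : Set G.V} (v : (G.induce P).V) : G.V := Subtype.val v

theorem ival_mem {G : Multigraph} {P : Set G.V} (v : (G.induce P).V) : ival v ∈ P := Subtype.prop v

theorem ival_iv {G : Multigraph} {P : Set G.V} (v : G.V) (h : v ∈ P) :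
    ival (iv v h) = v := rfl

theorem ival_inj {G : Multigraph} {P : Set G.V} :
    Function.Injective (ival : (G.induce P).V → G.V) := Subtype.val_injective

theorem delta_induce (G : Multigraph) (P S : Set G.V) :
    ((G.induce P).delta {v | ival v ∈ S} : ℤ)
      = ∑ e, ind ((G.ends e).1 ∈ P ∧ (G.ends e).2 ∈ P) * G.cr S e := by
  classical
  rw [delta_eq]
  have h1 : ∑ e, ind ((G.ends e).1 ∈ P ∧ (G.ends e).2 ∈ P) * G.cr S e
      = ∑ e ∈ Finset.univ.filter (fun e => (G.ends e).1 ∈ P ∧ (G.ends e).2 ∈ P), G.cr S e := by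
    rw [Finset.sum_filter]
    apply Finset.sum_congr rfl
    intro e _
    unfold ind
    split_ifs <;> simp
  rw [h1]
  apply Finset.sum_bij (fun (e : (G.induce P).E) _ => (Subtype.val e : G.E))
  · intro e _
    exact Finset.mem_filter.2 ⟨Finset.mem_univ _, e.2⟩
  · intro a _ b _ h
    exact Subtype.ext h
  · intro b hb
    exact ⟨⟨b, (Finset.mem_filter.1 hb).2⟩, Finset.mem_univ _, rfl⟩
  · intro e _
    rfl

/-- Inner boundary. -/
noncomputable def bx {G : Multigraph} {P : Set G.V} {r : ℕ} {e : Fin r → G.E} (h : Enum G P e)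
    (t : Fin r) : (G.induce P).V := iv (G.inn P (e t)) (h.inn_mem t)

/-- Outer boundary. -/
noncomputable def bz {G : Multigraph} {P : Set G.V} {r : ℕ} {e : Fin r → G.E} (h : Enum G P e)
    (t : Fin r) : (G.induce Pᶜ).V := iv (G.out P (e t)) (h.out_mem t)

/-- `F3`. -/
theorem dom_self {G : Multigraph} {P : Set G.V} {r : ℕ} {e : Fin r → G.E} (h : Enum G P e) :
    Dom G (join (G.induce P) (G.induce Pᶜ) (bx h) (bz h)) := by
  classical
  let f : G.V → (join (G.induce P) (G.induce Pᶜ) (bx h) (bz h)).V := fun v =>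
    if hv : v ∈ P then jl (bx h) (bz h) (iv v hv) else jr (bx h) (bz h) (iv v hv)
  have hfl : ∀ a : (G.induce P).V, f (ival a) = jl (bx h) (bz h) a := by
    intro a
    simp only [f]
    rw [dif_pos (ival_mem a)]
    rfl
  have hfr : ∀ a : (G.induce Pᶜ).V, f (ival a) = jr (bx h) (bz h) a := by
    intro a
    simp only [f]
    rw [dif_neg (ival_mem a)]
    rfl
  refine ⟨f, ?_, ?_⟩
  · intro u v huv
    simp only [f] at huv
    split_ifs at huv with h1 h2 h2
    · exact congrArg ival (jl_inj _ _ huv)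
    · exact absurd huv (jl_ne_jr _ _ _ _)
    · exact absurd huv.symm (jl_ne_jr _ _ _ _)
    · exact congrArg ival (jr_inj _ _ huv)
  · intro S
    have h0 := delta_join (bx h) (bz h) S {a | ival a ∈ f ⁻¹' S} {a | ival a ∈ f ⁻¹' S}
      (by intro a; simp only [Set.mem_ofPred_eq, Set.mem_preimage, hfl])
      (by intro a; simp only [Set.mem_ofPred_eq, Set.mem_preimage, hfr])
    rw [delta_induce, delta_induce] at h0
    have h1 := h.sum (fun a => xr (G.inn P a ∈ f ⁻¹' S) (G.out P a ∈ f ⁻¹' S))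
    have h2 : ((G.delta (f ⁻¹' S) : ℕ) : ℤ)
        = (join (G.induce P) (G.induce Pᶜ) (bx h) (bz h)).delta S := by
      rw [h0]
      refine Eq.trans ?_ (congrArg (_ + ·) h1.symm)
      rw [delta_eq, ← Finset.sum_add_distrib, ← Finset.sum_add_distrib]
      apply Finset.sum_congr rfl
      intro a _
      generalize f ⁻¹' S = S'
      unfold ind cr xr inn out
      by_cases h1 : (G.ends a).1 ∈ P <;> by_cases h2 : (G.ends a).2 ∈ P <;>
        simp [h1, h2]
      simp only [iff_comm]
    exact_mod_cast h2.le

theorem xr_tri (p q s : Prop) : xr p s ≤ xr p q + xr q s := by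
  unfold xr
  by_cases p <;> by_cases q <;> by_cases s <;> simp_all

/-- Linkage data. -/
def Lk (G : Multigraph) (P P' : Set G.V) {r : ℕ} (e e' : Fin r → G.E) : Prop :=
  ∃ L : Fin r → List G.E,
      (∀ t, ∃ w : G.Walk (G.inn P (e t)) (G.inn P' (e' t)), w.edges = L t ∧ w.support.Nodup ∧
        ∀ v ∈ w.support, v = G.inn P (e t) ∨ (v ∈ P' ∧ v ∉ P)) ∧
      (∀ t, ∀ f ∈ L t, (G.ends f).1 ∈ P' ∧ (G.ends f).2 ∈ P' ∧
        ¬ ((G.ends f).1 ∈ P ∧ (G.ends f).2 ∈ P)) ∧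
      ∀ t t', t ≠ t' → ∀ f ∈ L t, f ∉ L t'

/-- `F2`. -/
theorem dom_step {G : Multigraph} {P P' : Set G.V} (hPP : P ⊆ P') {r : ℕ} {e e' : Fin r → G.E}
    (h : Enum G P e) (h' : Enum G P' e') (hL : Lk G P P' e e') (B : Multigraph) (y : Fin r → B.V) :
    Dom (join (G.induce P) B (bx h) y) (join (G.induce P') B (bx h') y) := by
  classical
  obtain ⟨L, hW, hLP, hdisj⟩ := hL
  refine ⟨jelim (bx h) y (fun v => jl (bx h') y (iv (ival v) (hPP (ival_mem v))))
    (fun b => jr (bx h') y b), ?_, ?_⟩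
  · intro u v huv
    rcases jcases _ _ u with ⟨u, rfl⟩ | ⟨u, rfl⟩ <;> rcases jcases _ _ v with ⟨v, rfl⟩ | ⟨v, rfl⟩ <;>
      simp only [jelim_l, jelim_r] at huv
    · have h2 := congrArg ival (jl_inj _ _ huv)
      rw [ival_iv, ival_iv] at h2
      rw [ival_inj h2]
    · exact absurd huv (jl_ne_jr _ _ _ _)
    · exact absurd huv.symm (jl_ne_jr _ _ _ _)
    · rw [jr_inj _ _ huv]
  · intro S
    let S' : Set G.V := {v | ∃ hv : v ∈ P', jl (bx h') y (iv v hv) ∈ S}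
    have h0 := delta_join (bx h) y (jelim (bx h) y
        (fun v => jl (bx h') y (iv (ival v) (hPP (ival_mem v)))) (fun b => jr (bx h') y b) ⁻¹' S)
      {a | ival a ∈ S'} {b | jr (bx h') y b ∈ S}
      (by
        intro a
        simp only [Set.mem_ofPred_eq, Set.mem_preimage, jelim_l, S']
        exact ⟨fun ⟨_, h⟩ => h, fun h => ⟨_, h⟩⟩)
      (by intro a; simp only [Set.mem_ofPred_eq, Set.mem_preimage, jelim_r])
    have h1 := delta_join (bx h') y S {a | ival a ∈ S'} {b | jr (bx h') y b ∈ S}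
      (by
        intro a
        simp only [Set.mem_ofPred_eq, S']
        exact ⟨fun ⟨_, h⟩ => h, fun h => ⟨ival_mem a, h⟩⟩)
      (fun _ => Iff.rfl)
    rw [delta_induce] at h0 h1
    simp only [Set.mem_ofPred_eq, bx, ival_iv] at h0 h1
    have h2 : ∑ t, xr (G.inn P (e t) ∈ S') (jr (bx h') y (y t) ∈ S)
        ≤ ∑ t, xr (G.inn P (e t) ∈ S') (G.inn P' (e' t) ∈ S')
          + ∑ t, xr (G.inn P' (e' t) ∈ S') (jr (bx h') y (y t) ∈ S) := by
      rw [← Finset.sum_add_distrib]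
      exact Finset.sum_le_sum (fun t _ => xr_tri _ _ _)
    have hcr0 : ∀ f, 0 ≤ G.cr S' f := by
      intro f; rcases G.cr_cases S' f with h | h <;> rw [h] <;> norm_num
    have hind0 : ∀ p, 0 ≤ ind p := by intro p; unfold ind; split_ifs <;> simp
    have h3 : ∀ t, xr (G.inn P (e t) ∈ S') (G.inn P' (e' t) ∈ S')
        ≤ ∑ f, ind (f ∈ L t) * G.cr S' f := by
      intro t
      obtain ⟨w, hw, -, -⟩ := hW t
      by_cases hx : G.inn P (e t) ∈ S' ↔ G.inn P' (e' t) ∈ S'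
      · rw [xr, if_pos hx]
        exact Finset.sum_nonneg (fun f _ => mul_nonneg (hind0 _) (hcr0 _))
      · rw [xr, if_neg hx]
        obtain ⟨f, hf, hc⟩ := w.crosses S' hx
        rw [hw] at hf
        have := Finset.single_le_sum (f := fun f => ind (f ∈ L t) * G.cr S' f)
          (fun f _ => mul_nonneg (hind0 _) (hcr0 _)) (Finset.mem_univ f)
        refine le_trans ?_ this
        rw [ind_true hf, cr, if_neg hc]; norm_num
    have h4 : ∑ t, xr (G.inn P (e t) ∈ S') (G.inn P' (e' t) ∈ S')
        ≤ ∑ f, ((∑ t, ind (f ∈ L t)) * G.cr S' f) := by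
      refine (Finset.sum_le_sum (fun t _ => h3 t)).trans ?_
      rw [Finset.sum_comm]
      simp only [Finset.sum_mul]
      exact le_rfl
    have h5 : ∀ f, ∑ t, ind (f ∈ L t) ≤ ind ((G.ends f).1 ∈ P' ∧ (G.ends f).2 ∈ P')
        - ind ((G.ends f).1 ∈ P ∧ (G.ends f).2 ∈ P) := by
      intro f
      by_cases hf : ∃ t, f ∈ L t
      · obtain ⟨t, ht⟩ := hf
        have : ∑ t, ind (f ∈ L t) = ind (f ∈ L t) := by
          apply Finset.sum_eq_single
          · intro s _ hs
            exact ind_false (hdisj t s (Ne.symm hs) f ht)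
          · simp
        rw [this, ind_true ht]
        obtain ⟨k1, k2, k3⟩ := hLP t f ht
        rw [ind_true ⟨k1, k2⟩, ind_false k3]
        norm_num
      · rw [Finset.sum_eq_zero (fun t _ => ind_false (fun h => hf ⟨t, h⟩))]
        by_cases hp : (G.ends f).1 ∈ P ∧ (G.ends f).2 ∈ P
        · rw [ind_true hp, ind_true ⟨hPP hp.1, hPP hp.2⟩]; norm_num
        · rw [ind_false hp]
          have := hind0 ((G.ends f).1 ∈ P' ∧ (G.ends f).2 ∈ P')
          linarith
    have h6 : ∑ f, ((∑ t, ind (f ∈ L t)) * G.cr S' f)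
        ≤ ∑ f, ind ((G.ends f).1 ∈ P' ∧ (G.ends f).2 ∈ P') * G.cr S' f
          - ∑ f, ind ((G.ends f).1 ∈ P ∧ (G.ends f).2 ∈ P) * G.cr S' f := by
      rw [← Finset.sum_sub_distrib]
      apply Finset.sum_le_sum
      intro f _
      rw [← sub_mul]
      exact mul_le_mul_of_nonneg_right (h5 f) (hcr0 f)
    rw [← Int.ofNat_le]
    refine h0.le.trans (le_trans ?_ h1.ge)
    linarith

/-- `F1`. -/
theorem immersion_step {G : Multigraph} {P P' : Set G.V} (hPP : P ⊆ P') {r : ℕ}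
    {e e' : Fin r → G.E} (h : Enum G P e) (h' : Enum G P' e') (hL : Lk G P P' e e') :
    StrongImmersion (join (G.induce P) (G.induce P'ᶜ) (bx h) (bz h')) G := by
  classical
  obtain ⟨L, hW, hLP, hdisj⟩ := hL
  let H := join (G.induce P) (G.induce P'ᶜ) (bx h) (bz h')
  let vm : H.V → G.V := jelim (bx h) (bz h') ival ival
  have hvr : ∀ x, vm x ∈ P ∨ vm x ∉ P' := by
    intro x
    rcases jcases _ _ x with ⟨u, rfl⟩ | ⟨u, rfl⟩
    · exact Or.inl (ival_mem u)
    · exact Or.inr (ival_mem u)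
  let LL : H.E → List G.E := fun ε => Sum.elim (Sum.elim (fun a : (G.induce P).E => [a.1])
    (fun a : (G.induce P'ᶜ).E => [a.1])) (fun t => L t ++ [e' t]) ε
  have hex : ∀ ε : H.E, ∃ w : G.Walk (vm (H.ends ε).1) (vm (H.ends ε).2), w.edges = LL ε ∧
      w.support.Nodup ∧ ∀ x ∈ w.support, x ≠ vm (H.ends ε).1 → x ≠ vm (H.ends ε).2 →
        x ∉ Set.range vm := by
    have hsing : ∀ a : G.E, ∃ w : G.Walk (G.ends a).1 (G.ends a).2, w.edges = [a] ∧
        w.support.Nodup ∧ ∀ x ∈ w.support, x ≠ (G.ends a).1 → x ≠ (G.ends a).2 →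
          x ∉ Set.range vm := by
      intro a
      refine ⟨.cons a (Or.inl rfl) (.nil _), rfl, ?_, ?_⟩
      · simp only [Walk.support, List.nodup_cons, List.mem_singleton]
        exact ⟨G.loopless a, by simp⟩
      · intro x hx h1 h2
        simp only [Walk.support, List.mem_cons, List.not_mem_nil, or_false] at hx
        tauto
    rintro ((a | a) | t)
    · exact hsing a.1
    · exact hsing a.1
    · obtain ⟨w, hw, hn, hs⟩ := hW t
      have hsP : ∀ v ∈ w.support, v ∈ P' := by
        intro v hv
        rcases hs v hv with rfl | hv
        · exact hPP (h.inn_mem t)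
        · exact hv.1
      obtain ⟨q, hq1, hq2⟩ := w.snoc (e' t) (ends_inn_out G P' (e' t))
      have key : ∃ w : G.Walk (G.inn P (e t)) (G.out P' (e' t)), w.edges = L t ++ [e' t] ∧
          w.support.Nodup ∧ ∀ x ∈ w.support, x ≠ G.inn P (e t) → x ≠ G.out P' (e' t) →
            x ∉ Set.range vm := ?_
      · exact key
      refine ⟨q, hq2.trans (by rw [hw]), ?_, ?_⟩
      · rw [hq1]
        refine List.nodup_append.2 ⟨hn, by simp, ?_⟩
        rintro a ha b hb rfl
        rw [List.mem_singleton.1 hb] at ha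
        exact h'.out_mem t (hsP _ ha)
      · intro x hx h1 h2
        rw [hq1] at hx
        rcases List.mem_append.1 hx with hx | hx
        · rcases hs x hx with hx | hx
          · exact absurd hx h1
          · rintro ⟨z, rfl⟩
            rcases hvr z with hz | hz
            · exact hx.2 hz
            · exact hz hx.1
        · exact absurd (List.mem_singleton.1 hx) h2
  choose em hem hnd hst using hex
  have hPL : ∀ (a : G.E) (t : Fin r), (G.ends a).1 ∈ P → (G.ends a).2 ∈ P → a ∉ L t ++ [e' t] := by
    intro a t h1 h2 hm
    rcases List.mem_append.1 hm with hm | hm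
    · exact (hLP t a hm).2.2 ⟨h1, h2⟩
    · rw [List.mem_singleton.1 hm] at h1 h2
      exact h'.crosses t (iff_of_true (hPP h1) (hPP h2))
  have hPR : ∀ (a : G.E) (t : Fin r), (G.ends a).1 ∉ P' → (G.ends a).2 ∉ P' → a ∉ L t ++ [e' t] := by
    intro a t h1 h2 hm
    rcases List.mem_append.1 hm with hm | hm
    · exact h1 (hLP t a hm).1
    · rw [List.mem_singleton.1 hm] at h1 h2
      exact h'.crosses t (iff_of_false h1 h2)
  refine ⟨⟨⟨vm, ?_, em, hnd, ?_⟩, hst⟩⟩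
  · intro u v huv
    rcases jcases _ _ u with ⟨u, rfl⟩ | ⟨u, rfl⟩ <;> rcases jcases _ _ v with ⟨v, rfl⟩ | ⟨v, rfl⟩ <;>
      simp only [jelim_l, jelim_r, vm] at huv
    · rw [ival_inj huv]
    · have h1 := ival_mem v
      rw [← huv] at h1
      exact absurd (hPP (ival_mem u)) h1
    · have h1 := ival_mem u
      rw [huv] at h1
      exact absurd (hPP (ival_mem v)) h1
    · rw [ival_inj huv]
  · intro ε ε' hne f hf hf'
    rw [hem] at hf hf'
    rcases ε with (a | a) | t <;> rcases ε' with (b | b) | s <;>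
      simp only [LL, Sum.elim_inl, Sum.elim_inr] at hf hf'
    · apply hne
      have : a = b := Subtype.ext ((List.mem_singleton.1 hf).symm.trans (List.mem_singleton.1 hf'))
      rw [this]
    · have h1 : a.1 = b.1 := (List.mem_singleton.1 hf).symm.trans (List.mem_singleton.1 hf')
      have h2 := a.2.1
      rw [h1] at h2
      exact b.2.1 (hPP h2)
    · rw [List.mem_singleton.1 hf] at hf'
      exact hPL _ _ a.2.1 a.2.2 hf'
    · have h1 : a.1 = b.1 := (List.mem_singleton.1 hf).symm.trans (List.mem_singleton.1 hf')
      have h2 := b.2.1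
      rw [← h1] at h2
      exact a.2.1 (hPP h2)
    · apply hne
      have : a = b := Subtype.ext ((List.mem_singleton.1 hf).symm.trans (List.mem_singleton.1 hf'))
      rw [this]
    · rw [List.mem_singleton.1 hf] at hf'
      exact hPR _ _ a.2.1 a.2.2 hf'
    · rw [List.mem_singleton.1 hf'] at hf
      exact hPL _ _ b.2.1 b.2.2 hf
    · rw [List.mem_singleton.1 hf'] at hf
      exact hPR _ _ b.2.1 b.2.2 hf
    · have hts : t ≠ s := fun h => hne (by rw [h])
      rcases List.mem_append.1 hf with hf | hf <;> rcases List.mem_append.1 hf' with hf' | hf'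
      · exact hdisj t s hts f hf hf'
      · rw [List.mem_singleton.1 hf'] at hf
        have := hLP _ _ hf
        exact h'.crosses s (iff_of_true this.1 this.2.1)
      · rw [List.mem_singleton.1 hf] at hf'
        have := hLP _ _ hf'
        exact h'.crosses t (iff_of_true this.1 this.2.1)
      · exact hts (h'.1 ((List.mem_singleton.1 hf).symm.trans (List.mem_singleton.1 hf')))

theorem not_iso_step {G : Multigraph} {P P' : Set G.V} (hPP : P ⊆ P') (hne : ∃ v ∈ P', v ∉ P)
    {r : ℕ} (x : Fin r → (G.induce P).V) (y : Fin r → (G.induce P'ᶜ).V) :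
    ¬ (join (G.induce P) (G.induce P'ᶜ) x y).Isomorphic G := by
  rintro ⟨iso⟩
  have hinj : Function.Injective (jelim x y ival ival : _ → G.V) := by
    intro u v huv
    rcases jcases _ _ u with ⟨u, rfl⟩ | ⟨u, rfl⟩ <;> rcases jcases _ _ v with ⟨v, rfl⟩ | ⟨v, rfl⟩ <;>
      simp only [jelim_l, jelim_r] at huv
    · rw [ival_inj huv]
    · have h1 := ival_mem v
      rw [← huv] at h1
      exact absurd (hPP (ival_mem u)) h1
    · have h1 := ival_mem u
      rw [huv] at h1
      exact absurd (hPP (ival_mem v)) h1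
    · rw [ival_inj huv]
  have hs := Finite.injective_iff_surjective.1 (hinj.comp iso.fv.symm.injective)
  obtain ⟨v, hv, hvP⟩ := hne
  obtain ⟨z, hz⟩ := hs v
  simp only [Function.comp] at hz
  rcases jcases _ _ (iso.fv.symm z) with ⟨u, hu⟩ | ⟨u, hu⟩
  · rw [hu, jelim_l] at hz
    exact hvP (hz ▸ ival_mem u)
  · rw [hu, jelim_r] at hz
    have := ival_mem u
    rw [hz] at this
    exact this hv

end Multigraph

namespace Multigraph

theorem labels (G : Multigraph) (n r : ℕ) (P : ℕ → Set G.V)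
    (hsub : ∀ i, i + 1 < n → P i ⊆ P (i + 1)) (hd : ∀ i < n, G.delta (P i) = r)
    (hmin : ∀ i, i + 1 < n → ∀ S, P i ⊆ S → S ⊆ P (i + 1) → r ≤ G.delta S) (hn : 0 < n) (n' : ℕ) :
    ∃ e : ℕ → Fin r → G.E, (∀ i ≤ n', i < n → Enum G (P i) (e i)) ∧
      ∀ i < n', i + 1 < n → Lk G (P i) (P (i + 1)) (e i) (e (i + 1)) := by
  induction n' with
  | zero =>
    obtain ⟨e0, he0⟩ := enum_exists G (P 0) r (hd 0 hn)
    refine ⟨fun _ => e0, ?_, by intro i hi; omega⟩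
    intro i hi _
    obtain rfl : i = 0 := by omega
    exact he0
  | succ n' ih =>
    obtain ⟨e, h1, h2⟩ := ih
    by_cases hlt : n' + 1 < n
    · obtain ⟨e', he', hlk⟩ := linkage G (P n') (P (n' + 1)) (hsub n' hlt) r (hd _ (by omega))
        (hd _ hlt) (hmin n' hlt) (e n') (h1 n' le_rfl (by omega))
      refine ⟨fun i => if i ≤ n' then e i else e', ?_, ?_⟩
      · intro i hi hin
        by_cases hi' : i ≤ n'
        · simp only [hi', if_true]
          exact h1 i hi' hin
        · simp only [hi', if_false]
          obtain rfl : i = n' + 1 := by omega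
          exact he'
      · intro i hi hin
        by_cases hi' : i + 1 ≤ n'
        · simp only [hi', if_true, show i ≤ n' by omega]
          exact h2 i (by omega) hin
        · obtain rfl : i = n' := by omega
          simp only [hi', if_false, le_refl, if_true]
          exact hlk
    · refine ⟨e, fun i hi hin => h1 i (by omega) hin, fun i hi hin => h2 i (by omega) hin⟩

theorem chain (G : Multigraph) (k : ℕ) (hG : G ∈ obstructions StrongImmersion (cutwidthClass k))
    (n r m : ℕ) (P : ℕ → Set G.V)
    (hsub : ∀ i, i + 1 < n → P i ⊆ P (i + 1)) (hne : ∀ i, i + 1 < n → ∃ v ∈ P (i + 1), v ∉ P i)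
    (hd : ∀ i < n, G.delta (P i) = r)
    (hmin : ∀ i, i + 1 < n → ∀ S, P i ⊆ S → S ⊆ P (i + 1) → r ≤ G.delta S)
    (hm : (r + 1) * (2 * k + 2) ≤ m) (hn : Fintype.card (IF r m k) + 2 ≤ n) : False := by
  obtain ⟨hGC, hall⟩ := hG
  apply hGC
  change G.cutwidth ≤ k
  rw [cutwidth_le_iff]
  obtain ⟨e, he, hlk⟩ := labels G n r P hsub hd hmin (by omega) n
  have hE : ∀ i, i < n → Enum G (P i) (e i) := fun i hi => he i hi.le hi
  have hK : ∀ i, i + 1 < n → Lk G (P i) (P (i + 1)) (e i) (e (i + 1)) :=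
    fun i hi => hlk i (by omega) hi
  have hI : ∀ i : Fin (n - 1), ∃ I : IF r m k,
      ConfA (G.induce (P i)) (bx (hE i (by omega))) I ∧
      ConfB (G.induce (P (i + 1))ᶜ) (bz (hE (i + 1) (by omega))) I := by
    intro i
    have hi : (i : ℕ) + 1 < n := by omega
    apply unglue hm
    rw [← cutwidth_le_iff]
    exact hall _ (immersion_step (hsub i hi) (hE i (by omega)) (hE (i + 1) hi) (hK i hi))
      (not_iso_step (hsub i hi) (hne i hi) _ _)
  choose I hIA hIB using hI
  obtain ⟨i, j, hij, hIe⟩ : ∃ i j : Fin (n - 1), i < j ∧ I i = I j := by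
    obtain ⟨i, j, hij, h⟩ := Fintype.exists_ne_map_eq_of_card_lt I (by simp only [Fintype.card_fin]; omega)
    rcases lt_or_gt_of_ne hij with h1 | h1
    · exact ⟨i, j, h1, h⟩
    · exact ⟨j, i, h1, h.symm⟩
  have hij' : (i : ℕ) < j := hij
  have hi1 : (i : ℕ) + 1 < n := by omega
  have h1 := glue (I j) (hIA j) (hIe ▸ hIB i)
  have hdesc : ∀ d (hd' : (i : ℕ) + 1 + d < n),
      (join (G.induce (P (i + 1 + d))) (G.induce (P (i + 1))ᶜ) (bx (hE _ hd'))
        (bz (hE (i + 1) hi1))).OW k →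
      (join (G.induce (P (i + 1))) (G.induce (P (i + 1))ᶜ) (bx (hE _ hi1))
        (bz (hE (i + 1) hi1))).OW k := by
    intro d
    induction d with
    | zero => exact fun _ h => h
    | succ d ih =>
      intro hd' h
      have hd3 : (i : ℕ) + 1 + d + 1 < n := hd'
      have hd2 : (i : ℕ) + 1 + d < n := by omega
      exact ih hd2 (OW.of_dom (dom_step (hsub _ hd3) (hE _ hd2) (hE _ hd3) (hK _ hd3) _ _) h)
  obtain ⟨d, hd'⟩ : ∃ d, (j : ℕ) = i + 1 + d := ⟨j - (i + 1), by omega⟩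
  have h2 : (join (G.induce (P (i + 1))) (G.induce (P (i + 1))ᶜ) (bx (hE _ hi1))
        (bz (hE (i + 1) hi1))).OW k := by
    apply hdesc d (by omega)
    have key : ∀ a (ha : a < n), a = (j : ℕ) → (join (G.induce (P a)) (G.induce (P (i + 1))ᶜ)
        (bx (hE _ ha)) (bz (hE (i + 1) hi1))).OW k := by
      intro a ha haj
      subst haj
      exact h1
    exact key _ (by omega) hd'.symm
  exact OW.of_dom (dom_self _) h2

theorem word (N : ℕ) (hN : 0 < N) (c : ℕ) : ∀ (w : ℕ → ℕ) (lo s len : ℕ), N ^ c ≤ len →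
    (∀ i, s ≤ i → i < s + len → lo ≤ w i ∧ w i < lo + c) →
    ∃ r, lo ≤ r ∧ r < lo + c ∧ ∃ g : ℕ → ℕ, (∀ i < N, s ≤ g i ∧ g i < s + len ∧ w (g i) = r) ∧
      (∀ i, i + 1 < N → g i < g (i + 1)) ∧
      ∀ x, g 0 ≤ x → x ≤ g (N - 1) → r ≤ w x := by
  induction c with
  | zero =>
    intro w lo s len hlen hw
    simp only [pow_zero] at hlen
    have := hw s le_rfl (by omega)
    omega
  | succ c ih =>
    intro w lo s len hlen hw
    rw [pow_succ'] at hlen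
    by_cases hall : ∀ a < N, ∃ i, s + a * N ^ c ≤ i ∧ i < s + (a + 1) * N ^ c ∧ w i = lo
    · choose! g hg1 hg2 hg3 using hall
      have hb : ∀ a < N, s ≤ g a ∧ g a < s + len := by
        intro a ha
        have h1 := hg1 a ha
        have h2 := hg2 a ha
        have h3 : (a + 1) * N ^ c ≤ N * N ^ c := Nat.mul_le_mul_right _ ha
        exact ⟨le_trans (Nat.le_add_right _ _) h1, by omega⟩
      refine ⟨lo, le_rfl, by omega, g, fun i hi => ⟨(hb i hi).1, (hb i hi).2, hg3 i hi⟩, ?_, ?_⟩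
      · intro i hi
        have h1 := hg1 (i + 1) hi
        have h2 := hg2 i (by omega)
        omega
      · intro x hx1 hx2
        have := hb 0 hN
        have := hb (N - 1) (by omega)
        exact (hw x (by omega) (by omega)).1
    · push Not at hall
      obtain ⟨a, ha, hno⟩ := hall
      have h3 : (a + 1) * N ^ c ≤ N * N ^ c := Nat.mul_le_mul_right _ ha
      have h4 : (a + 1) * N ^ c = a * N ^ c + N ^ c := by ring
      obtain ⟨r, hr1, hr2, g, hg1, hg2, hg3⟩ := ih w (lo + 1) (s + a * N ^ c) (N ^ c) le_rfl (by
        intro i hi1 hi2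
        have h5 := hw i (le_trans (Nat.le_add_right _ _) hi1) (by omega)
        have h6 := hno i hi1 (by omega)
        omega)
      refine ⟨r, by omega, by omega, g, ?_, hg2, hg3⟩
      intro i hi
      obtain ⟨k1, k2, k3⟩ := hg1 i hi
      exact ⟨le_trans (Nat.le_add_right _ _) k1, by omega, k3⟩

end Multigraph

namespace Multigraph

theorem delete_si (G : Multigraph) (F : Set G.E) : StrongImmersion (G.deleteEdges F) G := by
  refine ⟨{ vmap := fun v => v
            inj := fun _ _ h => h
            emap := fun e => Walk.cons e.1 (Or.inl rfl) (Walk.nil _)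
            isPath := ?_
            edgeDisj := ?_
            strong := ?_ }⟩
  · intro e
    have h : ([(G.ends e.1).1, (G.ends e.1).2] : List G.V).Nodup := by
      simpa using G.loopless e.1
    exact h
  · intro e e' hne f hf hf'
    simp only [Walk.edges, List.mem_singleton] at hf hf'
    exact hne (Subtype.ext (hf.symm.trans hf'))
  · intro e x hx h1 h2
    have hx' : x ∈ ([(G.ends e.1).1, (G.ends e.1).2] : List G.V) := hx
    rcases List.mem_cons.1 hx' with h | h
    · exact absurd h h1
    · exact absurd (List.mem_singleton.1 h) h2

theorem delete_not_iso (G : Multigraph) (e : G.E) : ¬ (G.deleteEdges {e}).Isomorphic G := by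
  rintro ⟨i⟩
  have h := Nat.card_congr i.fe
  have h2 : Nat.card {x : G.E // x ∉ ({e} : Set G.E)} < Nat.card G.E := by
    have := Set.ncard_lt_ncard (s := ({e}ᶜ : Set G.E)) (t := Set.univ)
      (by
        refine ⟨Set.subset_univ _, fun hh => ?_⟩
        exact hh (Set.mem_univ e) rfl) (Set.toFinite _)
    rw [Set.ncard_univ] at this
    exact this
  exact absurd h (ne_of_lt h2)

theorem delete_delta (G : Multigraph) (e : G.E) (S : Set G.V) :
    G.delta S ≤ (G.deleteEdges {e}).delta S + 1 := by
  unfold delta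
  have h1 : {f : G.E | ¬ ((G.ends f).1 ∈ S ↔ (G.ends f).2 ∈ S)} ⊆
      insert e ((fun f : {x : G.E // x ∉ ({e} : Set G.E)} => f.1) ''
        {f | ¬ ((G.ends f.1).1 ∈ S ↔ (G.ends f.1).2 ∈ S)}) := by
    intro f hf
    by_cases h : f = e
    · exact Or.inl h
    · exact Or.inr ⟨⟨f, h⟩, hf, rfl⟩
  refine (Set.ncard_le_ncard h1 (Set.toFinite _)).trans ?_
  refine (Set.ncard_insert_le _ _).trans ?_
  exact Nat.add_le_add_right (Set.ncard_image_le (Set.toFinite _)) 1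

theorem obs_ow (G : Multigraph) (k : ℕ)
    (hG : G ∈ obstructions StrongImmersion (cutwidthClass k)) : G.OW (k + 1) := by
  obtain ⟨h1, h2⟩ := hG
  rcases isEmpty_or_nonempty G.E with he | ⟨⟨e⟩⟩
  · obtain ⟨f, hf⟩ := Countable.exists_injective_nat G.V
    refine ⟨fun _ => 0, f, fun u v huv => hf (by simpa using huv), fun v => ?_⟩
    have : G.delta (pre (fun _ => 0) f v) = 0 := by
      unfold delta
      rw [Set.ncard_eq_zero (Set.toFinite _)]
      exact Set.eq_empty_of_isEmpty _
    omega
  · have h3 := h2 _ (delete_si G {e}) (delete_not_iso G e)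
    obtain ⟨T, ρ, hi, hk⟩ := (cutwidth_le_iff _ _).1 h3
    exact ⟨T, ρ, hi, fun v => (delete_delta G e _).trans (Nat.add_le_add_right (hk v) 1)⟩

/-- Admissible rankings. -/
def Adm (G : Multigraph) (K : ℕ) (ρ : G.V → ℕ) : Prop :=
  Function.Injective ρ ∧ (∀ v, ρ v < Nat.card G.V) ∧ ∀ v, G.delta {u | ρ u ≤ ρ v} ≤ K

theorem min_order (G : Multigraph) (K : ℕ) (h : G.OW K) :
    ∃ ρ, Adm G K ρ ∧ ∀ i j r (S : Set G.V), i ≤ j → {v | ρ v < i} ⊆ S → S ⊆ {v | ρ v < j} →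
      (∀ t, i ≤ t → t ≤ j → r ≤ G.delta {v | ρ v < t}) → r ≤ G.delta S := by
  classical
  have hex : ∃ s ρ, Adm G K ρ ∧ ∑ v, G.delta {u | ρ u ≤ ρ v} = s := by
    obtain ⟨T, ρ, hi, hk⟩ := h
    obtain ⟨ρ', a, b, c⟩ := exists_rank T ρ hi
    exact ⟨_, ρ', ⟨a, b, fun v => by rw [c]; exact hk v⟩, rfl⟩
  obtain ⟨ρ, hA, hs⟩ := Nat.find_spec hex
  refine ⟨ρ, hA, ?_⟩
  intro i j r S0 hij hS0 hS0' ht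
  by_contra hlt
  have hq : ∀ v, {u | ρ u ≤ ρ v} = {u | ρ u < ρ v + 1} := fun v => by
    ext u; simp only [Set.mem_ofPred_eq]; omega
  obtain ⟨S, ⟨hS, hS'⟩, hmin⟩ := Set.exists_min_image
    {S : Set G.V | {v | ρ v < i} ⊆ S ∧ S ⊆ {v | ρ v < j}} G.delta (Set.toFinite _)
    ⟨S0, hS0, hS0'⟩
  have hSr : G.delta S < r := lt_of_le_of_lt (hmin S0 ⟨hS0, hS0'⟩) (not_le.1 hlt)
  have hSi : ∀ t, i ≤ t → t ≤ j → S ≠ {v | ρ v < t} := by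
    rintro t h1 h2 h3
    have := ht t h1 h2
    rw [← h3] at this
    omega
  -- the cuts compare
  have hcap : ∀ v ∈ S, G.delta (S ∩ {u | ρ u ≤ ρ v}) ≤ G.delta {u | ρ u ≤ ρ v} := by
    intro v hv
    have hvj : ρ v < j := hS' hv
    by_cases hi : i ≤ ρ v + 1
    · have h1 := G.delta_submod S {u | ρ u ≤ ρ v}
      have h2 := hmin (S ∪ {u | ρ u ≤ ρ v}) ⟨hS.trans Set.subset_union_left,
        Set.union_subset hS' (fun u (hu : ρ u ≤ ρ v) => lt_of_le_of_lt hu hvj)⟩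
      omega
    · rw [Set.inter_eq_right.2]
      intro u (hu : ρ u ≤ ρ v)
      exact hS (show ρ u < i by omega)
  have hcup : ∀ v, v ∉ S → G.delta (S ∪ {u | ρ u ≤ ρ v}) ≤ G.delta {u | ρ u ≤ ρ v} := by
    intro v hv
    have hvi : i ≤ ρ v := by
      by_contra hh
      exact hv (hS (show ρ v < i by omega))
    by_cases hj : ρ v < j
    · have h1 := G.delta_submod S {u | ρ u ≤ ρ v}
      have h2 := hmin (S ∩ {u | ρ u ≤ ρ v}) ⟨Set.subset_inter hS
          (fun u (hu : ρ u < i) => show ρ u ≤ ρ v by omega),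
        Set.inter_subset_left.trans hS'⟩
      omega
    · rw [Set.union_eq_right.2]
      intro u hu
      have : ρ u < j := hS' hu
      exact (show ρ u ≤ ρ v by omega)
  let T : G.V → ℕ := fun v => if v ∈ S then 0 else 1
  have hinj : Function.Injective (fun v => (T v, ρ v)) := fun u v huv =>
    hA.1 (Prod.ext_iff.1 huv).2
  have hpin : ∀ v ∈ S, pre T ρ v = S ∩ {u | ρ u ≤ ρ v} := by
    intro v hv
    ext u
    by_cases hu : u ∈ S <;> simp [pre, T, hv, hu]
  have hpout : ∀ v, v ∉ S → pre T ρ v = S ∪ {u | ρ u ≤ ρ v} := by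
    intro v hv
    ext u
    by_cases hu : u ∈ S <;> simp [pre, T, hv, hu]
  have hle : ∀ v, G.delta (pre T ρ v) ≤ G.delta {u | ρ u ≤ ρ v} := by
    intro v
    by_cases hv : v ∈ S
    · rw [hpin v hv]; exact hcap v hv
    · rw [hpout v hv]; exact hcup v hv
  obtain ⟨v, hv, hvl⟩ : ∃ v, v ∈ S ∧ G.delta (pre T ρ v) < G.delta {u | ρ u ≤ ρ v} := by
    have hne : S.Nonempty := by
      rw [Set.nonempty_iff_ne_empty]
      intro h0
      apply hSi i le_rfl hij
      rw [h0] at hS ⊢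
      exact (Set.subset_empty_iff.1 hS).symm
    obtain ⟨v, hv, hmax⟩ := Set.exists_max_image S ρ (Set.toFinite _) hne
    refine ⟨v, hv, ?_⟩
    have hvj : ρ v < j := hS' hv
    have hvi : i ≤ ρ v + 1 := by
      by_contra hh
      apply hSi i le_rfl hij
      refine Set.Subset.antisymm (fun u hu => ?_) hS
      have := hmax u hu
      exact (show ρ u < i by omega)
    have hsub : S ⊆ {u | ρ u ≤ ρ v} := fun u hu => hmax u hu
    rw [hpin v hv, Set.inter_eq_left.2 hsub]
    refine lt_of_lt_of_le hSr ?_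
    rw [hq]
    exact ht _ hvi hvj
  obtain ⟨ρ', a, b, c⟩ := exists_rank T ρ hinj
  have hsum : ∑ v, G.delta {u | ρ' u ≤ ρ' v} < ∑ v, G.delta {u | ρ u ≤ ρ v} := by
    apply Finset.sum_lt_sum
    · intro w _
      rw [c]; exact hle w
    · exact ⟨v, Finset.mem_univ _, by rw [c]; exact hvl⟩
  rw [hs] at hsum
  exact Nat.find_min hex hsum ⟨ρ', ⟨a, b, fun w => by rw [c]; exact (hle w).trans (hA.2.2 w)⟩, rfl⟩

/-- The combinatorial bound. -/
theorem comb_bound (G : Multigraph) (k m J : ℕ)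
    (hG : G ∈ obstructions StrongImmersion (cutwidthClass k))
    (hm : (k + 2) * (2 * k + 2) ≤ m)
    (hJ : ∀ r ≤ k + 1, Fintype.card (IF r m k) + 2 ≤ J) :
    Nat.card G.V < J ^ (k + 2) := by
  by_contra hlen
  push Not at hlen
  obtain ⟨ρ, ⟨hinj, hlt, hw⟩, hmin⟩ := min_order G (k + 1) (obs_ow G k hG)
  have hJ0 : 0 < J := by have := hJ 0 (by omega); omega
  have hsurj : ∀ i < Nat.card G.V, ∃ v, ρ v = i := by
    intro i hi
    have hb : Function.Bijective (fun v => (⟨ρ v, hlt v⟩ : Fin (Nat.card G.V))) := by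
      rw [Fintype.bijective_iff_injective_and_card]
      refine ⟨fun u v huv => hinj (by simpa using huv), ?_⟩
      rw [Fintype.card_fin, Nat.card_eq_fintype_card]
    obtain ⟨v, hv⟩ := hb.2 ⟨i, hi⟩
    exact ⟨v, by simpa using hv⟩
  have hdl : ∀ i, i < Nat.card G.V → G.delta {v | ρ v < i} ≤ k + 1 := by
    intro i hi
    rcases Nat.eq_zero_or_pos i with rfl | h0
    · simp [delta_empty]
    · obtain ⟨v, hv⟩ := hsurj (i - 1) (by omega)
      have : {u | ρ u < i} = {u | ρ u ≤ ρ v} := by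
        ext u; simp only [Set.mem_ofPred_eq]; omega
      rw [this]; exact hw v
  obtain ⟨r, -, hr, g, hg, hgm, hgr⟩ := word J hJ0 (k + 2) (fun i => G.delta {v | ρ v < i}) 0 0
    (Nat.card G.V) hlen (fun i _ hi => ⟨Nat.zero_le _, by have := hdl i (by omega); omega⟩)
  have hg0 : ∀ i < J, g 0 ≤ g i := by
    intro i
    induction i with
    | zero => intro _; exact le_rfl
    | succ i ih => intro h; exact (ih (by omega)).trans (hgm i h).le
  have hgl : ∀ d i, i + d = J - 1 → g i ≤ g (J - 1) := by
    intro d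
    induction d with
    | zero => intro i h; rw [show i = J - 1 by omega]
    | succ d ih => intro i h; exact (hgm i (by omega)).le.trans (ih (i + 1) (by omega))
  refine chain G k hG J r m (fun i => {v | ρ v < g i}) ?_ ?_ ?_ ?_ ?_ (hJ r (by omega))
  · intro i hi v (hv : ρ v < g i)
    have := hgm i hi
    exact (show ρ v < g (i + 1) by omega)
  · intro i hi
    obtain ⟨v, hv⟩ := hsurj (g i) (by have := hg i (by omega); omega)
    have := hgm i hi
    exact ⟨v, show ρ v < g (i + 1) by omega, show ¬ ρ v < g i by omega⟩
  · intro i hi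
    exact (hg i hi).2.2
  · intro i hi S h1 h2
    refine hmin (g i) (g (i + 1)) r S (hgm i hi).le h1 h2 (fun t ht1 ht2 => ?_)
    exact hgr t ((hg0 i (by omega)).trans ht1) (ht2.trans (hgl (J - 1 - (i + 1)) (i + 1) (by omega)))
  · refine le_trans ?_ hm
    exact Nat.mul_le_mul_right _ (by omega)

end Multigraph

namespace Multigraph

theorem card_IF (r m k : ℕ) :
    Fintype.card (IF r m k) = m ^ (2 * r) * (k + 1) ^ (2 * m) := by
  simp only [IF, Fintype.card_prod, Fintype.card_fun, Fintype.card_fin]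
  ring

theorem pow_two_gap (x n : ℕ) (hx : 1 ≤ x) (hn : 2 ≤ n) : x ^ n + 2 ≤ (x + 1) ^ n := by
  obtain ⟨d, rfl⟩ : ∃ d, n = d + 2 := ⟨n - 2, by omega⟩
  have h1 : x ^ d ≤ (x + 1) ^ d := Nat.pow_le_pow_left (by omega) d
  have h2 : 1 ≤ x ^ d := Nat.one_le_pow _ _ hx
  calc x ^ (d + 2) + 2 ≤ x ^ d * x ^ 2 + 2 * x ^ d := by rw [pow_add]; omega
    _ ≤ x ^ d * (x + 1) ^ 2 := by nlinarith
    _ ≤ (x + 1) ^ d * (x + 1) ^ 2 := Nat.mul_le_mul_right _ h1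
    _ = (x + 1) ^ (d + 2) := (pow_add _ _ _).symm

theorem J_bound (k r : ℕ) (hr : r ≤ k + 1) :
    Fintype.card (IF r ((k + 2) * (2 * k + 2)) k) + 2 ≤
      ((k + 2) * (2 * k + 2)) ^ (2 * (k + 1)) * (k + 2) ^ (2 * ((k + 2) * (2 * k + 2))) := by
  rw [card_IF]
  generalize hm : (k + 2) * (2 * k + 2) = m
  have hm1 : 1 ≤ m := by rw [← hm]; nlinarith
  have h1 : m ^ (2 * r) ≤ m ^ (2 * (k + 1)) := Nat.pow_le_pow_right hm1 (by omega)
  have h2 := pow_two_gap (k + 1) (2 * m) (by omega) (by omega)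
  have h3 : 1 ≤ m ^ (2 * (k + 1)) := Nat.one_le_pow _ _ hm1
  have h4 : m ^ (2 * r) * (k + 1) ^ (2 * m) ≤ m ^ (2 * (k + 1)) * (k + 1) ^ (2 * m) :=
    Nat.mul_le_mul_right _ h1
  have h5 := Nat.mul_le_mul_left (m ^ (2 * (k + 1))) h2
  rw [Nat.mul_add] at h5
  have h6 : 2 ≤ m ^ (2 * (k + 1)) * 2 := by omega
  exact (Nat.add_le_add h4 h6).trans h5

theorem final_nat (k : ℕ) :
    (((k + 2) * (2 * k + 2)) ^ (2 * (k + 1)) *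
      (k + 2) ^ (2 * ((k + 2) * (2 * k + 2)))) ^ (k + 2) ≤
    (((2 * k + 3) * (2 * k + 6)) ^ (2 * (k + 1)) *
      (k + 2) ^ (2 * ((2 * k + 3) * (2 * k + 6)))) ^ (k + 1) := by
  have hml : (k + 2) * (2 * k + 2) ≤ (2 * k + 3) * (2 * k + 6) := by nlinarith
  have hma : (k + 2) * (2 * k + 2) ≤ (k + 2) ^ 3 := by
    have : 2 * k + 2 ≤ (k + 2) ^ 2 := by nlinarith
    calc (k + 2) * (2 * k + 2) ≤ (k + 2) * (k + 2) ^ 2 := Nat.mul_le_mul_left _ this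
      _ = (k + 2) ^ 3 := by ring
  have he : 3 * (2 * (k + 1)) + 2 * ((k + 2) * (2 * k + 2)) * (k + 2) ≤
      2 * ((2 * k + 3) * (2 * k + 6)) * (k + 1) := by nlinarith
  generalize (k + 2) * (2 * k + 2) = m at *
  generalize (2 * k + 3) * (2 * k + 6) = l at *
  calc (m ^ (2 * (k + 1)) * (k + 2) ^ (2 * m)) ^ (k + 2)
      = m ^ (2 * (k + 1) * (k + 1)) * (m ^ (2 * (k + 1)) * (k + 2) ^ (2 * m * (k + 2))) := by
        rw [mul_pow, ← pow_mul, ← pow_mul, show 2 * (k + 1) * (k + 2) =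
          2 * (k + 1) * (k + 1) + 2 * (k + 1) by ring, pow_add, mul_assoc]
    _ ≤ l ^ (2 * (k + 1) * (k + 1)) * (k + 2) ^ (2 * l * (k + 1)) := by
        apply Nat.mul_le_mul (Nat.pow_le_pow_left hml _)
        calc m ^ (2 * (k + 1)) * (k + 2) ^ (2 * m * (k + 2))
            ≤ ((k + 2) ^ 3) ^ (2 * (k + 1)) * (k + 2) ^ (2 * m * (k + 2)) :=
              Nat.mul_le_mul_right _ (Nat.pow_le_pow_left hma _)
          _ = (k + 2) ^ (3 * (2 * (k + 1)) + 2 * m * (k + 2)) := by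
              rw [← pow_mul, ← pow_add]
          _ ≤ _ := Nat.pow_le_pow_right (by omega) he
    _ = _ := by rw [mul_pow, ← pow_mul, ← pow_mul]

theorem real_N (k l : ℕ) (hl : 0 < l) :
    (2 : ℝ) ^ (2 * (((k : ℝ) + 1) * Real.logb 2 (l : ℝ) + (l : ℝ) * Real.logb 2 ((k : ℝ) + 2)))
      = ((l ^ (2 * (k + 1)) * (k + 2) ^ (2 * l) : ℕ) : ℝ) := by
  have e : (2 * (((k : ℝ) + 1) * Real.logb 2 (l : ℝ) + (l : ℝ) * Real.logb 2 ((k : ℝ) + 2)))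
      = Real.logb 2 (l : ℝ) * ((2 * (k + 1) : ℕ) : ℝ)
        + Real.logb 2 ((k : ℝ) + 2) * ((2 * l : ℕ) : ℝ) := by
    push_cast; ring
  have hl' : (0 : ℝ) < l := by exact_mod_cast hl
  rw [e, Real.rpow_add (by norm_num), Real.rpow_mul (by norm_num), Real.rpow_mul (by norm_num),
    Real.rpow_logb (by norm_num) (by norm_num) hl',
    Real.rpow_logb (by norm_num) (by norm_num) (by positivity), Real.rpow_natCast,
    Real.rpow_natCast]
  push_cast
  rfl

end Multigraph

open Multigraph in
/-- every minimal strong-immersion obstruction for cutwidth at most `k`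
has at most `N^(k+1)` vertices, where `ℓ = (2k+3)(2k+6)` and
`N = 2^(2((k+1)·log₂ℓ + ℓ·log₂(k+2))) + 2`. -/
theorem cutwidth_obstruction_vertex_bound
    (k : ℕ) (hk : 1 ≤ k) (ℓ : ℕ) (hℓ : ℓ = (2 * k + 3) * (2 * k + 6))
    (N : ℝ)
    (hN : N = (2 : ℝ) ^ (2 * (((k : ℝ) + 1) * Real.logb 2 (ℓ : ℝ)
                + (ℓ : ℝ) * Real.logb 2 ((k : ℝ) + 2))) + 2)
    (G : Multigraph)
    (hG : G ∈ obstructions StrongImmersion (cutwidthClass k)) :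
    (Nat.card G.V : ℝ) ≤ N ^ (k + 1) := by
  have h1 := comb_bound G k _ _ hG le_rfl (J_bound k)
  have h2 := h1.le.trans (final_nat k)
  rw [← hℓ] at h2
  rw [real_N k ℓ (by rw [hℓ]; positivity)] at hN
  have h3 : (Nat.card G.V : ℝ) ≤ ((ℓ ^ (2 * (k + 1)) * (k + 2) ^ (2 * ℓ) : ℕ) : ℝ) ^ (k + 1) := by
    exact_mod_cast h2
  refine h3.trans (pow_le_pow_left₀ (Nat.cast_nonneg _) ?_ _)
  rw [hN]
  linarith
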